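/- arXiv:1212.0527 — 5 statements merged into one kernel-verified Lean document; each statement's English description precedes it below -/
import Mathlib

section
/- Under Conditions (A)–(D) with b_j ≠ 0 for all j ≥ 1, for every V ∈ 𝒱 and every f ∈ 𝒞 = 𝒱 ∩ C₊(𝒜), the sequence of normalized functions {‖𝔓_k^V f‖_∞^{-1} 𝔓_k^V f, k ≥ 0} is uniformly equicontinuous on 𝒜 (uniform Feller property of the Feynman–Kac semigroup 𝔓_k^V for the determining class 𝒞). -/
open MeasureTheory ProbabilityTheory Filter Topology BoundedContinuousFunction
open scoped ENNReal NNReal Pointwise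

noncomputable section

/-- The sets `𝒜_k(B)`: `𝒜_0(B) = B`, `𝒜_k(B) = S(𝒜_{k-1}(B)) + 𝒦`. -/
def attain {H : Type*} [AddCommGroup H] (S : H → H) (K : Set H) (B : Set H) : ℕ → Set H
  | 0 => B
  | n + 1 => S '' attain S K B n + K

/-- The domain of attainability `𝒜(B)` from `B`: the closure of `⋃_k 𝒜_k(B)`. -/
def attainDom {H : Type*} [AddCommGroup H] [TopologicalSpace H]
    (S : H → H) (K : Set H) (B : Set H) : Set H :=
  closure (⋃ n, attain S K B n)

variable {H : Type} [NormedAddCommGroup H] [InnerProductSpace ℝ H] [CompleteSpace H]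

/-- The orthogonal projection `𝖯_N` onto the span of the first `N` vectors of an orthonormal
basis. -/
def projB (e : HilbertBasis ℕ ℝ H) (N : ℕ) (u : H) : H :=
  ∑ j ∈ Finset.range N, e.repr u j • (e j : H)

/-- Condition (A): regularity and stability. -/
def CondA (S : H → H) : Prop :=
  ContDiff ℝ 1 S ∧
  ∀ R r : ℝ, 0 < r → r < R →
    ∃ C : ℝ, 0 < C ∧ ∃ a : ℝ, 0 < a ∧ a < 1 ∧ ∃ n₀ : ℕ, 1 ≤ n₀ ∧
      (∀ u₁ ∈ Metric.closedBall (0 : H) R, ∀ u₂ ∈ Metric.closedBall (0 : H) R,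
          ‖S u₁ - S u₂‖ ≤ C * ‖u₁ - u₂‖) ∧
      ∀ u ∈ Metric.closedBall (0 : H) R, ∀ n : ℕ, n₀ ≤ n →
          ‖S^[n] u‖ ≤ max (a * ‖u‖) r

/-- Condition (B): dissipativity. -/
def CondB (S : H → H) (K : Set H) : Prop :=
  ∃ ρ : ℝ, 0 < ρ ∧ ∃ k₀ : ℝ → ℕ, Monotone k₀ ∧
    ∀ R : ℝ, 0 ≤ R → ∀ k : ℕ, k₀ R ≤ k →
      attain S K (Metric.closedBall 0 R) k ⊆ Metric.closedBall (0 : H) ρ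

/-- Condition (C): squeezing. -/
def CondC (S : H → H) (e : HilbertBasis ℕ ℝ H) : Prop :=
  ∀ R : ℝ, 0 < R → ∃ γ : ℕ → ℝ, (∀ N, 0 < γ N) ∧ Antitone γ ∧
    Tendsto γ atTop (𝓝 0) ∧
    ∀ N : ℕ, ∀ u₁ ∈ Metric.closedBall (0 : H) R, ∀ u₂ ∈ Metric.closedBall (0 : H) R,
      ‖(S u₁ - S u₂) - projB e N (S u₁ - S u₂)‖ ≤ γ N * ‖u₁ - u₂‖

/-- Condition (D): structure of the noise, `η_k = ∑_j b_j ξ_{jk} e_j` with `∑ b_j² < ∞`,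
independent scalar `ξ_{jk}` whose laws have Lipschitz densities `p_j` with `p_j(0) > 0` and
support in `[-1,1]`. -/
def CondD [MeasurableSpace H] {Ω : Type*} [MeasurableSpace Ω] (P : Measure Ω)
    (e : HilbertBasis ℕ ℝ H) (η : ℕ → Ω → H)
    (b : ℕ → ℝ) (ξ : ℕ → ℕ → Ω → ℝ) (p : ℕ → ℝ → ℝ) : Prop :=
  (∀ j, 0 ≤ b j) ∧ Summable (fun j => (b j) ^ 2) ∧
  (∀ k ω, HasSum (fun j => (b j * ξ j k ω) • (e j : H)) (η k ω)) ∧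
  (∀ j k, Measurable (ξ j k)) ∧
  iIndepFun (fun jk : ℕ × ℕ => ξ jk.1 jk.2) P ∧
  (∀ j k, Measure.map (ξ j k) P
      = (volume : Measure ℝ).withDensity fun x => ENNReal.ofReal (p j x)) ∧
  (∀ j, ∃ L : ℝ≥0, LipschitzWith L (p j)) ∧
  (∀ j, 0 < p j 0) ∧
  (∀ j, Function.support (p j) ⊆ Set.Icc (-1 : ℝ) 1)

/-- The trajectory `u_k = S(u_{k-1}) + η_k` of the random dynamical system issued from `u₀`. -/
def traj {Ω : Type*} (S : H → H) (η : ℕ → Ω → H) (u₀ : Ω → H) : ℕ → Ω → H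
  | 0 => u₀
  | k + 1 => fun ω => S (traj S η u₀ k ω) + η (k + 1) ω

/-- The (topological) support of a measure. -/
def msupp {X : Type*} [TopologicalSpace X] [MeasurableSpace X] (μ : Measure X) : Set X :=
  {x | ∀ U ∈ 𝓝 x, 0 < μ U}

/-- The occupation measures `ζ_k = k⁻¹ ∑_{n=0}^{k-1} δ_{x_n}` of a sequence. -/
def occ {X : Type*} [MeasurableSpace X] (x : ℕ → X) (k : ℕ) : ProbabilityMeasure X :=
  if hk : k = 0 then ⟨Measure.dirac (x 0), Measure.dirac.isProbabilityMeasure⟩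
  else
    ⟨(k : ℝ≥0∞)⁻¹ • ∑ n ∈ Finset.range k, Measure.dirac (x n), by
      refine ⟨?_⟩
      simp only [Measure.smul_apply, Measure.finset_sum_apply, measure_univ,
        Finset.sum_const, Finset.card_range, nsmul_eq_mul, mul_one, smul_eq_mul]
      exact ENNReal.inv_mul_cancel (Nat.cast_ne_zero.mpr hk) (ENNReal.natCast_ne_top k)⟩

/-- Large deviation principle for the sequence of events `prob k` (the laws of random
probability measures in `Z`), with rate function `I`. -/
def LDPof {Z : Type*} [TopologicalSpace Z] (prob : ℕ → Set Z → ℝ≥0∞) (I : Z → ℝ≥0∞) : Prop :=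
  (∀ F : Set Z, IsClosed F →
    Filter.limsup (fun k : ℕ => (((k : ℝ)⁻¹ : ℝ) : EReal) * ENNReal.log (prob k F)) atTop
      ≤ -(⨅ σ ∈ F, (I σ : EReal))) ∧
  (∀ G : Set Z, IsOpen G →
    -(⨅ σ ∈ G, (I σ : EReal))
      ≤ Filter.liminf (fun k : ℕ => (((k : ℝ)⁻¹ : ℝ) : EReal) * ENNReal.log (prob k G)) atTop)

/-- A good rate function: lower semicontinuous with compact level sets. -/
def GoodRate {Z : Type*} [TopologicalSpace Z] (I : Z → ℝ≥0∞) : Prop :=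
  LowerSemicontinuous I ∧ ∀ c : ℝ≥0∞, c ≠ ⊤ → IsCompact {σ : Z | I σ ≤ c}

/-- The Feynman–Kac semigroup `𝔓_k^V f(u) = 𝔼_u [f(u_k) exp(∑_{n=1}^k V(u_n))]`. -/
def FK {H : Type} [NormedAddCommGroup H] [InnerProductSpace ℝ H] [CompleteSpace H]
    {Ω : Type} [MeasurableSpace Ω] (P : Measure Ω)
    (S : H → H) (η : ℕ → Ω → H) (V : H → ℝ) (k : ℕ) (f : H → ℝ) (u : H) : ℝ :=
  ∫ ω, f (traj S η (fun _ => u) k ω) *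
    Real.exp (∑ n ∈ Finset.Icc 1 k, V (traj S η (fun _ => u) n ω)) ∂P

/-- Sup-norm over a set `A`. -/
def supOn {H : Type*} (A : Set H) (g : H → ℝ) : ℝ := ⨆ x : A, |g (x : H)|

set_option linter.unusedSectionVars false

lemma cont_projB (e : HilbertBasis ℕ ℝ H) (j : ℕ) : Continuous (fun u : H => e.repr u j) := by
  have : (fun u : H => e.repr u j) = fun u => inner ℝ (e j) u := by
    funext u; exact e.repr_apply_apply u j
  rw [this]; fun_prop

lemma repr_basis (e : HilbertBasis ℕ ℝ H) (i j : ℕ) :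
    e.repr (e i) j = if j = i then 1 else 0 := by
  classical
  rw [HilbertBasis.repr_self, lp.single_apply]
  by_cases h : j = i
  · subst h; simp
  · simp [h]

lemma abs_repr_le (e : HilbertBasis ℕ ℝ H) (u : H) (j : ℕ) : |e.repr u j| ≤ ‖u‖ := by
  rw [e.repr_apply_apply]
  have := abs_real_inner_le_norm (e j) u
  rwa [e.orthonormal.1 j, one_mul] at this

lemma projB_eq_of_repr (e : HilbertBasis ℕ ℝ H) (N : ℕ) (u v : H)
    (h : ∀ j < N, e.repr u j = e.repr v j) : projB e N u = projB e N v := by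
  unfold projB
  exact Finset.sum_congr rfl fun j hj => by rw [h j (Finset.mem_range.1 hj)]

/-- invariance -/
lemma attainDom_inv (S : H → H) (hS : Continuous S) (K : Set H) (u : H)
    (hu : u ∈ attainDom S K {0}) (z : H) (hz : z ∈ K) : S u + z ∈ attainDom S K {0} := by
  unfold attainDom at *
  have hc : Continuous (fun u => S u + z) := by fun_prop
  refine map_mem_closure (f := fun u => S u + z) hc hu ?_
  intro x hx
  obtain ⟨n, hn⟩ := Set.mem_iUnion.1 hx
  exact Set.mem_iUnion.2 ⟨n+1, Set.add_mem_add (Set.mem_image_of_mem _ hn) hz⟩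

lemma attain_compact (S : H → H) (hS : Continuous S) (K : Set H) (hK : IsCompact K) (n : ℕ) :
    IsCompact (attain S K {0} n) := by
  induction n with
  | zero => exact isCompact_singleton
  | succ n ih => exact (ih.image hS).add hK

lemma attain_bdd (S : H → H) (hS : Continuous S) (K : Set H) (hK : IsCompact K)
    (hB : CondB S K) : ∃ R : ℝ, 0 < R ∧ ∀ n, attain S K {0} n ⊆ Metric.closedBall 0 R := by
  obtain ⟨ρ, hρ, k₀, -, h⟩ := hB
  have hb : Bornology.IsBounded (⋃ n ∈ Finset.range (k₀ 0), attain S K {0} n) := by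
    refine (Bornology.isBounded_biUnion_finset _).2 fun n _ => (attain_compact S hS K hK n).isBounded
  obtain ⟨R, hR⟩ := hb.subset_closedBall 0
  refine ⟨max R ρ, lt_max_of_lt_right hρ, fun n => ?_⟩
  by_cases hn : k₀ 0 ≤ n
  · have := h 0 le_rfl n hn
    rw [Metric.closedBall_zero] at this
    exact this.trans (Metric.closedBall_subset_closedBall (le_max_right _ _))
  · refine Set.Subset.trans ?_ (Metric.closedBall_subset_closedBall (le_max_left R ρ))
    refine Set.Subset.trans ?_ hR
    exact Set.subset_biUnion_of_mem (u := fun n => attain S K {0} n) (by simpa using hn)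

lemma attainDom_bdd (S : H → H) (hS : Continuous S) (K : Set H) (hK : IsCompact K)
    (hB : CondB S K) : ∃ R : ℝ, 0 < R ∧ attainDom S K {0} ⊆ Metric.closedBall 0 R := by
  obtain ⟨R, hR, h⟩ := attain_bdd S hS K hK hB
  exact ⟨R, hR, closure_minimal (Set.iUnion_subset h) Metric.isClosed_closedBall⟩

lemma totallyBounded_image (S : H → H) (e : HilbertBasis ℕ ℝ H) (hA : CondA S) (hC : CondC S e)
    (R : ℝ) (hR : 0 < R) : TotallyBounded (S '' Metric.closedBall 0 R) := by
  obtain ⟨C, hC0, a, -, -, n₀, -, hlip, -⟩ := hA.2 R (R/2) (by positivity) (by linarith)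
  obtain ⟨γ, hγ0, -, hγ, hsq⟩ := hC R hR
  rw [Metric.totallyBounded_iff]
  intro ε hε
  obtain ⟨N, hN⟩ := ((tendsto_order.1 hγ).2 (ε / (2 * R)) (by positivity)).exists
  -- compact set
  let T : (ℕ → ℝ) → H := fun c => S 0 + ∑ j ∈ Finset.range N, c j • (e j : H)
  have hT : Continuous T := by fun_prop
  let Q : Set H := T '' (Set.univ.pi fun _ => Set.Icc (-(C*R)) (C*R))
  have hQ : IsCompact Q := (isCompact_univ_pi fun _ => isCompact_Icc).image hT
  obtain ⟨t, htf, ht⟩ := Metric.totallyBounded_iff.1 hQ.totallyBounded (ε/2) (by positivity)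
  refine ⟨t, htf, ?_⟩
  rintro _ ⟨u, hu, rfl⟩
  have h0 : (0:H) ∈ Metric.closedBall (0:H) R := by simp [hR.le]
  have hu' : ‖u‖ ≤ R := by simpa using hu
  let q : H := S 0 + projB e N (S u - S 0)
  have hq : q ∈ Q := by
    refine ⟨fun j => e.repr (S u - S 0) j, ?_, rfl⟩
    intro j _
    refine abs_le.1 (?_ : |e.repr (S u - S 0) j| ≤ C * R)
    calc _ ≤ ‖S u - S 0‖ := abs_repr_le e _ j
      _ ≤ C * ‖u - 0‖ := hlip u hu 0 h0
      _ ≤ C * R := by rw [sub_zero]; gcongr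
  have hd : dist (S u) q < ε / 2 := by
    rw [dist_eq_norm]
    have : S u - q = (S u - S 0) - projB e N (S u - S 0) := by simp only [q]; abel
    rw [this]
    calc _ ≤ γ N * ‖u - 0‖ := hsq N u hu 0 h0
      _ ≤ γ N * R := by rw [sub_zero]; have := hγ0 N; gcongr
      _ < ε / (2 * R) * R := by gcongr
      _ = ε / 2 := by field_simp
  obtain ⟨y, hy, hqy⟩ := Set.mem_iUnion₂.1 (ht hq)
  refine Set.mem_iUnion₂.2 ⟨y, hy, ?_⟩
  rw [Metric.mem_ball] at *
  calc dist (S u) y ≤ dist (S u) q + dist q y := dist_triangle _ _ _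
    _ < ε/2 + ε/2 := by gcongr
    _ = ε := by ring

lemma attainDom_compact (S : H → H) (e : HilbertBasis ℕ ℝ H) (K : Set H) (hK : IsCompact K)
    (hA : CondA S) (hB : CondB S K) (hC : CondC S e) : IsCompact (attainDom S K {0}) := by
  have hS : Continuous S := hA.1.continuous
  obtain ⟨R, hR, h⟩ := attain_bdd S hS K hK hB
  have h1 : IsCompact (closure (S '' Metric.closedBall 0 R)) :=
    (totallyBounded_image S e hA hC R hR).closure.isCompact_of_isClosed isClosed_closure
  have h2 : IsCompact ({0} ∪ (closure (S '' Metric.closedBall 0 R) + K)) :=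
    isCompact_singleton.union (h1.add hK)
  refine h2.of_isClosed_subset isClosed_closure (closure_minimal ?_ h2.isClosed)
  refine Set.iUnion_subset fun n => ?_
  cases n with
  | zero => exact Set.subset_union_left
  | succ n =>
    refine Set.Subset.trans ?_ Set.subset_union_right
    exact Set.add_subset_add ((Set.image_mono (h n)).trans subset_closure) subset_rfl

lemma zero_mem_attainDom (S : H → H) (K : Set H) : (0:H) ∈ attainDom S K {0} :=
  subset_closure (Set.mem_iUnion.2 ⟨0, rfl⟩)

lemma ms_tail_meas [SecondCountableTopology H] [MeasurableSpace H] [BorelSpace H]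
    {Ω : Type} (e : HilbertBasis ℕ ℝ H) (η : ℕ → Ω → H)
    (b : ℕ → ℝ) (ξ : ℕ → ℕ → Ω → ℝ)
    (hη : ∀ k ω, HasSum (fun j => (b j * ξ j k ω) • (e j : H)) (η k ω)) (N k : ℕ)
    (I : Set (ℕ × ℕ)) (hI : ∀ j, N ≤ j → (j, k) ∈ I) :
    Measurable[⨆ jk ∈ I, MeasurableSpace.comap (ξ jk.1 jk.2) inferInstance]
      (fun ω => η k ω - ∑ j ∈ Finset.range N, (b j * ξ j k ω) • (e j : H)) := by
  set m : MeasurableSpace Ω := ⨆ jk ∈ I, MeasurableSpace.comap (ξ jk.1 jk.2) inferInstance with hm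
  have hξ : ∀ j, N ≤ j → Measurable[m] (ξ j k) := by
    intro j hj
    rw [measurable_iff_comap_le]
    exact le_iSup₂_of_le (f := fun (jk : ℕ × ℕ) (_ : jk ∈ I) =>
      MeasurableSpace.comap (ξ jk.1 jk.2) inferInstance) (j, k) (hI j hj) le_rfl
  refine measurable_of_tendsto_metrizable
    (f := fun n ω => ∑ j ∈ Finset.Ico N (n+N), (b j * ξ j k ω) • (e j : H)) ?_ ?_
  · intro n
    refine Finset.measurable_fun_sum _ fun j hj => ?_
    exact ((hξ j (Finset.mem_Ico.1 hj).1).const_mul _).smul_const _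
  · rw [tendsto_pi_nhds]
    intro ω
    have h1 := ((hη k ω).tendsto_sum_nat.comp (tendsto_add_atTop_nat N)).sub_const
      (∑ j ∈ Finset.range N, (b j * ξ j k ω) • (e j : H))
    refine h1.congr fun n => ?_
    simp only [Function.comp]
    rw [Finset.sum_Ico_eq_sub _ (by omega)]

lemma ms_law_eq [SecondCountableTopology H] [MeasurableSpace H] [BorelSpace H]
    {Ω : Type} [MeasurableSpace Ω] (P : Measure Ω) [IsProbabilityMeasure P]
    (e : HilbertBasis ℕ ℝ H) (η : ℕ → Ω → H) (hηmeas : ∀ k, Measurable (η k))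
    (b : ℕ → ℝ) (ξ : ℕ → ℕ → Ω → ℝ) (p : ℕ → ℝ → ℝ) (hD : CondD P e η b ξ p) (k : ℕ) :
    Measure.map (η k) P = Measure.map (η 1) P := by
  obtain ⟨hb0, hbs, hη, hξm, hind, hlaw, -⟩ := hD
  let ι : H → (ℕ → ℝ) := fun u j => e.repr u j
  have hιc : Continuous ι := continuous_pi fun j => cont_projB e j
  have hιi : Function.Injective ι := by
    intro u v huv
    apply e.repr.injective
    ext j
    exact congrFun huv j
  have hιe : MeasurableEmbedding ι := hιc.measurableEmbedding hιi
  have hcoord : ∀ n ω, ι (η n ω) = fun j => b j * ξ j n ω := by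
    intro n ω
    funext j
    have h1 := (hη n ω).mapL (innerSL ℝ (e j))
    have h2 : HasSum (fun i => (innerSL ℝ (e j)) ((b i * ξ i n ω) • (e i : H))) (b j * ξ j n ω) := by
      convert hasSum_single j ?_ using 1
      · simp [real_inner_self_eq_norm_sq, e.orthonormal.1 j]
      · intro i hi
        simp [inner_smul_right, e.orthonormal.2 hi.symm]
    have h3 := h1.unique h2
    simp only [ι]
    rw [e.repr_apply_apply]
    simpa using h3
  have hl : ∀ n, Measure.map (fun ω j => ξ j n ω) P
      = Measure.infinitePi (fun j => Measure.map (ξ j 1) P) := by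
    intro n
    have h1 : iIndepFun (fun j => ξ j n) P :=
      hind.precomp (g := fun j => (j, n)) (fun a b h => (Prod.ext_iff.1 h).1)
    have h2 := (iIndepFun_iff_map_fun_eq_infinitePi_map (fun j => hξm j n)).1 h1
    rw [h2]
    congr 1
    funext j
    rw [hlaw, hlaw]
  have hmul : Measurable (fun (x : ℕ → ℝ) j => b j * x j) := by fun_prop
  have hξn : ∀ n, Measurable (fun ω j => ξ j n ω) := fun n => measurable_pi_iff.2 fun j => hξm j n
  have hι : ∀ n, Measure.map ι (Measure.map (η n) P) =
      Measure.map (fun (x : ℕ → ℝ) j => b j * x j)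
        (Measure.infinitePi (fun j => Measure.map (ξ j 1) P)) := by
    intro n
    rw [← hl n, Measure.map_map hιe.measurable (hηmeas n), Measure.map_map hmul (hξn n)]
    congr 1
    funext ω
    exact hcoord n ω
  rw [← hιe.comap_map (Measure.map (η k) P), ← hιe.comap_map (Measure.map (η 1) P), hι, hι]

lemma ms_pi_density (N : ℕ) (q : Fin N → ℝ → ℝ) (hq : ∀ j, Continuous (q j)) (hq0 : ∀ j x, 0 ≤ q j x)
    (hqs : ∀ j x, q j x ≠ 0 → |x| ≤ 1)
    (ν : Fin N → Measure ℝ) [∀ j, IsProbabilityMeasure (ν j)]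
    (hν : ∀ j, ν j = (volume : Measure ℝ).withDensity fun x => ENNReal.ofReal (q j x)) :
    Measure.pi ν = (volume : Measure (Fin N → ℝ)).withDensity
      fun x => ENNReal.ofReal (∏ j, q j (x j)) := by
  have hqi : ∀ j, Integrable (q j) := by
    intro j
    refine (hq j).integrable_of_hasCompactSupport ?_
    refine HasCompactSupport.intro (isCompact_Icc (a := (-1:ℝ)) (b := 1)) fun x hx => ?_
    by_contra h
    exact hx (abs_le.1 (hqs j x h))
  refine Measure.pi_eq fun s hs => ?_
  rw [withDensity_apply _ (MeasurableSet.univ_pi hs), ← lintegral_indicator (MeasurableSet.univ_pi hs)]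
  have h1 : ∀ x : Fin N → ℝ, (Set.univ.pi s).indicator (fun x => ENNReal.ofReal (∏ j, q j (x j))) x
      = ENNReal.ofReal (∏ j, (s j).indicator (q j) (x j)) := by
    intro x
    by_cases hx : x ∈ Set.univ.pi s
    · rw [Set.indicator_of_mem hx]
      congr 1
      exact Finset.prod_congr rfl fun j _ => (Set.indicator_of_mem (hx j trivial) _).symm
    · rw [Set.indicator_of_notMem hx]
      have : ∃ j, x j ∉ s j := by simpa [Set.mem_pi] using hx
      obtain ⟨j, hj⟩ := this
      rw [Finset.prod_eq_zero (Finset.mem_univ j) (Set.indicator_of_notMem hj _)]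
      simp
  simp_rw [h1]
  have hii : ∀ j, Integrable ((s j).indicator (q j)) := fun j => (hqi j).indicator (hs j)
  have hn : ∀ j x, 0 ≤ (s j).indicator (q j) x := fun j x => Set.indicator_nonneg (fun y _ => hq0 j y) x
  rw [← ofReal_integral_eq_lintegral_ofReal]
  · rw [integral_fintype_prod_volume_eq_prod, ENNReal.ofReal_prod_of_nonneg]
    · refine Finset.prod_congr rfl fun j _ => ?_
      rw [hν j, withDensity_apply _ (hs j), integral_indicator (hs j),
        ofReal_integral_eq_lintegral_ofReal (hqi j).integrableOn (ae_of_all _ (hq0 j))]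
    · intro j _
      exact integral_nonneg (hn j)
  · exact Integrable.fintype_prod hii
  · exact ae_of_all _ fun x => Finset.prod_nonneg fun j _ => hn j _

lemma ms_lip_prod (N : ℕ) (q : Fin N → ℝ → ℝ) (L : Fin N → ℝ≥0) (hq : ∀ j, LipschitzWith (L j) (q j))
    (B : Fin N → ℝ) (hB : ∀ j x, |q j x| ≤ B j) (s : Finset (Fin N)) :
    (∃ C, 0 ≤ C ∧ ∀ x : Fin N → ℝ, |∏ j ∈ s, q j (x j)| ≤ C) ∧
    ∃ D, 0 ≤ D ∧ ∀ x y : Fin N → ℝ, |∏ j ∈ s, q j (x j) - ∏ j ∈ s, q j (y j)| ≤ D * ‖x - y‖ := by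
  classical
  induction s using Finset.induction_on with
  | empty => exact ⟨⟨1, by simp, by simp⟩, 0, le_rfl, by simp⟩
  | insert i s hi ih =>
    obtain ⟨⟨C, hC, h1⟩, D, hD, h2⟩ := ih
    have hBi : 0 ≤ B i := (abs_nonneg _).trans (hB i 0)
    refine ⟨⟨B i * C, by positivity, fun x => ?_⟩, B i * D + L i * C, by positivity, fun x y => ?_⟩
    · rw [Finset.prod_insert hi, abs_mul]
      exact mul_le_mul (hB i _) (h1 x) (abs_nonneg _) hBi
    · rw [Finset.prod_insert hi, Finset.prod_insert hi]
      have h3 : |q i (x i) - q i (y i)| ≤ L i * ‖x - y‖ := by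
        have := (hq i).dist_le_mul (x i) (y i)
        rw [Real.dist_eq, Real.dist_eq] at this
        refine this.trans ?_
        gcongr
        exact norm_le_pi_norm (x - y) i
      set X := ∏ j ∈ s, q j (x j)
      set Y := ∏ j ∈ s, q j (y j)
      have : q i (x i) * X - q i (y i) * Y = q i (x i) * (X - Y) + (q i (x i) - q i (y i)) * Y := by ring
      rw [this]
      calc _ ≤ |q i (x i) * (X - Y)| + |(q i (x i) - q i (y i)) * Y| := abs_add_le _ _
        _ ≤ B i * (D * ‖x - y‖) + (L i * ‖x - y‖) * C := by
          rw [abs_mul, abs_mul]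
          exact add_le_add (mul_le_mul (hB i _) (h2 x y) (abs_nonneg _) hBi)
            (mul_le_mul h3 (h1 y) (abs_nonneg _) (by positivity))
        _ = _ := by ring

lemma ms_add_aux [SecondCountableTopology H] [MeasurableSpace H] [BorelSpace H]
    {Ω : Type} (m : MeasurableSpace Ω) (f g : Ω → H) (hf : Measurable f) (hg : Measurable g) :
    Measurable (fun ω => f ω + g ω) := hf.add hg

lemma ms_prod_aux {Ω A B : Type} (m : MeasurableSpace Ω) [MeasurableSpace A] [MeasurableSpace B]
    (f : Ω → A) (g : Ω → B) (hf : Measurable f) (hg : Measurable g) :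
    Measurable (fun ω => (f ω, g ω)) := hf.prodMk hg

/-- coordinate injection -/
def msT (e : HilbertBasis ℕ ℝ H) (b : ℕ → ℝ) (N : ℕ) (x : Fin N → ℝ) : H :=
  ∑ j : Fin N, (b j * x j) • (e j : H)

lemma msT_cont (e : HilbertBasis ℕ ℝ H) (b : ℕ → ℝ) (N : ℕ) : Continuous (msT e b N) := by
  unfold msT; fun_prop

lemma ms_decomp [SecondCountableTopology H] [MeasurableSpace H] [BorelSpace H]
    {Ω : Type} [MeasurableSpace Ω] (P : Measure Ω) [IsProbabilityMeasure P]
    (e : HilbertBasis ℕ ℝ H) (η : ℕ → Ω → H) (hηmeas : ∀ k, Measurable (η k))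
    (b : ℕ → ℝ) (ξ : ℕ → ℕ → Ω → ℝ) (p : ℕ → ℝ → ℝ) (hD : CondD P e η b ξ p) (N : ℕ) :
    ∃ (r : (Fin N → ℝ) → ℝ) (l : Measure H), Continuous r ∧ (∀ x, 0 ≤ r x) ∧
      (∀ x, r x ≠ 0 → ‖x‖ ≤ 1) ∧ (∃ D, 0 ≤ D ∧ ∀ x y, |r x - r y| ≤ D * ‖x - y‖) ∧
      IsProbabilityMeasure l ∧
      IsProbabilityMeasure ((volume : Measure (Fin N → ℝ)).withDensity
        fun x => ENNReal.ofReal (r x)) ∧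
      Measure.map (η 1) P = Measure.map (fun z : (Fin N → ℝ) × H => msT e b N z.1 + z.2)
        (((volume : Measure (Fin N → ℝ)).withDensity fun x => ENNReal.ofReal (r x)).prod l) := by
  have hD' := hD
  obtain ⟨hb0, hbs, hη, hξm, hind, hlaw, hpL, hp0, hps⟩ := hD
  let q : ℕ → ℝ → ℝ := fun j x => max (p j x) 0
  choose Lp hLp using hpL
  have hqL : ∀ j, LipschitzWith (Lp j) (q j) := fun j => (hLp j).max_const 0
  have hq0 : ∀ j x, 0 ≤ q j x := fun j x => le_max_right _ _
  have hqs : ∀ j x, q j x ≠ 0 → |x| ≤ 1 := by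
    intro j x hx
    have : p j x ≠ 0 := by
      intro h; apply hx; simp [q, h]
    exact abs_le.2 (hps j this)
  have hqB : ∀ j x, |q j x| ≤ q j 0 + Lp j := by
    intro j x
    rw [abs_of_nonneg (hq0 j x)]
    by_cases hx : q j x = 0
    · rw [hx]; have := hq0 j 0; positivity
    · have h1 := (hqL j).dist_le_mul x 0
      rw [Real.dist_eq, Real.dist_eq, sub_zero] at h1
      have h2 : (Lp j : ℝ) * |x| ≤ Lp j * 1 := by gcongr; exact hqs j x hx
      have := le_abs_self (q j x - q j 0)
      linarith
  let r : (Fin N → ℝ) → ℝ := fun x => ∏ j : Fin N, q j (x j)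
  let X : Ω → (Fin N → ℝ) := fun ω j => ξ j 1 ω
  let W : Ω → H := fun ω => η 1 ω - ∑ j ∈ Finset.range N, (b j * ξ j 1 ω) • (e j : H)
  have hX : Measurable X := measurable_pi_iff.2 fun j => hξm j 1
  have hW : Measurable W := by
    refine (hηmeas 1).sub (Finset.measurable_fun_sum _ fun j _ => ?_)
    exact ((hξm j 1).const_mul _).smul_const _
  have hXW : IndepFun X W P := by
    have h0 := indep_iSup_of_disjoint (fun jk : ℕ × ℕ => (hξm jk.1 jk.2).comap_le) hind
      (S := {jk | jk.1 < N}) (T := {jk | N ≤ jk.1})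
      (Set.disjoint_left.2 fun x hx hx' => by simp at hx hx'; omega)
    rw [IndepFun_iff_Indep]
    refine indep_of_indep_of_le_left (indep_of_indep_of_le_right h0 ?_) ?_
    · rw [← measurable_iff_comap_le]
      exact ms_tail_meas e η b ξ hη N 1 _ fun j hj => hj
    · rw [← measurable_iff_comap_le]
      refine @measurable_pi_lambda _ _ _ (_) _ _ fun j => ?_
      rw [measurable_iff_comap_le]
      exact le_iSup₂_of_le (f := fun (jk : ℕ × ℕ) (_ : jk ∈ {jk : ℕ × ℕ | jk.1 < N}) =>
        MeasurableSpace.comap (ξ jk.1 jk.2) inferInstance) ((j : ℕ), 1) j.2 le_rfl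
  have hXlaw : Measure.map X P = (volume : Measure (Fin N → ℝ)).withDensity
        fun x => ENNReal.ofReal (r x) := by
    have h1 : iIndepFun (fun j : Fin N => ξ j 1) P :=
      hind.precomp (g := fun j : Fin N => ((j : ℕ), 1))
        (fun a b h => Fin.ext (Prod.ext_iff.1 h).1)
    have h2 := (iIndepFun_iff_map_fun_eq_pi_map (fun j : Fin N => (hξm j 1).aemeasurable)).1 h1
    have : ∀ j : Fin N, IsProbabilityMeasure (Measure.map (ξ j 1) P) :=
      fun j => Measure.isProbabilityMeasure_map (hξm j 1).aemeasurable
    rw [h2]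
    refine ms_pi_density N (fun j : Fin N => q j) (fun j => (hqL j).continuous) (fun j => hq0 j)
      (fun j => hqs j) _ fun j => ?_
    rw [hlaw]
    congr 1
    funext x
    simp only [q]
    rw [ENNReal.ofReal_max]; simp
  have hpX : IsProbabilityMeasure (Measure.map X P) := Measure.isProbabilityMeasure_map hX.aemeasurable
  have hpW : IsProbabilityMeasure (Measure.map W P) := Measure.isProbabilityMeasure_map hW.aemeasurable
  refine ⟨r, Measure.map W P, ?_, fun x => Finset.prod_nonneg fun j _ => hq0 j _, ?_, ?_, hpW, ?_, ?_⟩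
  · exact continuous_finsetProd _ fun j _ => (hqL j).continuous.comp (continuous_apply j)
  · intro x hx
    rw [pi_norm_le_iff_of_nonneg zero_le_one]
    intro j
    exact hqs j _ (Finset.prod_ne_zero_iff.1 hx j (Finset.mem_univ j))
  · exact (ms_lip_prod N (fun j => q j) (fun j => Lp j) (fun j => hqL j) _ (fun j => hqB j)
      Finset.univ).2
  · rw [← hXlaw]; exact hpX
  · rw [← hXlaw, ← (indepFun_iff_map_prod_eq_prod_map_map hX.aemeasurable hW.aemeasurable).1 hXW,
      Measure.map_map (by have := (msT_cont e b N).measurable; fun_prop) (hX.prodMk hW)]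
    congr 1
    funext ω
    simp only [Function.comp, msT, X, W]
    rw [Finset.sum_range (fun j => (b j * ξ j 1 ω) • (e j : H))]
    abel

/-- one-step Feynman–Kac operator -/
def msQ [MeasurableSpace H] (S : H → H) (V : H → ℝ) (μ : Measure H) (g : H → ℝ) (u : H) : ℝ :=
  ∫ z, g (S u + z) * Real.exp (V (S u + z)) ∂μ

lemma msQ_meas [SecondCountableTopology H] [MeasurableSpace H] [BorelSpace H]
    (S : H → H) (hS : Measurable S) (V : H → ℝ) (hV : Measurable V) (μ : Measure H)
    [IsProbabilityMeasure μ] (g : H → ℝ) (hg : Measurable g) : Measurable (msQ S V μ g) := by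
  have : StronglyMeasurable (fun x : H × H => g (S x.1 + x.2) * Real.exp (V (S x.1 + x.2))) := by
    apply Measurable.stronglyMeasurable
    fun_prop
  exact this.integral_prod_right.measurable

lemma msQ_bdd [SecondCountableTopology H] [MeasurableSpace H] [BorelSpace H]
    (S : H → H) (V : H → ℝ) (Λ : ℝ) (hV : ∀ x, |V x| ≤ Λ) (μ : Measure H)
    [IsProbabilityMeasure μ] (g : H → ℝ) (B : ℝ) (hg : ∀ x, |g x| ≤ B) (u : H) :
    |msQ S V μ g u| ≤ B * Real.exp Λ := by
  have := norm_integral_le_of_norm_le_const (μ := μ) (C := B * Real.exp Λ)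
    (f := fun z => g (S u + z) * Real.exp (V (S u + z))) (ae_of_all _ fun z => ?_)
  · simpa [msQ] using this
  · rw [Real.norm_eq_abs, abs_mul, Real.abs_exp]
    exact mul_le_mul (hg _) (Real.exp_le_exp.2 ((le_abs_self _).trans (hV _))) (Real.exp_pos _).le
      ((abs_nonneg _).trans (hg 0))

lemma ms_past_meas [SecondCountableTopology H] [MeasurableSpace H] [BorelSpace H]
    {Ω : Type} (S : H → H) (hS : Measurable S) (e : HilbertBasis ℕ ℝ H) (η : ℕ → Ω → H)
    (b : ℕ → ℝ) (ξ : ℕ → ℕ → Ω → ℝ)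
    (hη : ∀ k ω, HasSum (fun j => (b j * ξ j k ω) • (e j : H)) (η k ω))
    (V : H → ℝ) (hV : Measurable V) (k : ℕ) (u : H) :
    Measurable[⨆ jk ∈ {jk : ℕ × ℕ | jk.2 ≤ k},
      MeasurableSpace.comap (ξ jk.1 jk.2) inferInstance] (fun ω => (traj S η (fun _ => u) k ω,
    ∑ n ∈ Finset.Icc 1 k, V (traj S η (fun _ => u) n ω))) := by
  have hη' : ∀ (I : Set (ℕ × ℕ)) (n : ℕ), (∀ j, (j, n) ∈ I) →
      Measurable[⨆ jk ∈ I, MeasurableSpace.comap (ξ jk.1 jk.2) inferInstance] (η n) := by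
    intro I n h
    have := ms_tail_meas e η b ξ hη 0 n I fun j _ => h j
    simpa using this
  let m : MeasurableSpace Ω := ⨆ jk ∈ {jk : ℕ × ℕ | jk.2 ≤ k},
    MeasurableSpace.comap (ξ jk.1 jk.2) inferInstance
  have htm : ∀ n ≤ k, Measurable[m] (traj S η (fun _ => u) n) := by
    intro n
    induction n with
    | zero => intro _; exact @measurable_const _ _ _ m u
    | succ n ih =>
      intro hn
      have h1 := hS.comp (ih (by omega))
      have h2 : Measurable[m] (η (n+1)) := hη' _ _ fun j => hn
      exact ms_add_aux m _ _ h1 h2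
  have hsm : Measurable[m] (fun ω => ∑ n ∈ Finset.Icc 1 k, V (traj S η (fun _ => u) n ω)) := by
    refine @Finset.measurable_fun_sum _ _ _ _ _ _ m _ _ fun n hn => ?_
    exact hV.comp (htm n (Finset.mem_Icc.1 hn).2)
  exact ms_prod_aux m _ _ (htm k le_rfl) hsm

lemma msFK_succ [SecondCountableTopology H] [MeasurableSpace H] [BorelSpace H]
    {Ω : Type} [MeasurableSpace Ω] (P : Measure Ω) [IsProbabilityMeasure P]
    (S : H → H) (hS : Measurable S)
    (e : HilbertBasis ℕ ℝ H) (η : ℕ → Ω → H) (hηmeas : ∀ k, Measurable (η k))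
    (b : ℕ → ℝ) (ξ : ℕ → ℕ → Ω → ℝ) (p : ℕ → ℝ → ℝ) (hD : CondD P e η b ξ p)
    (V : H → ℝ) (hV : Measurable V) (Λ : ℝ) (hVb : ∀ x, |V x| ≤ Λ)
    (g : H → ℝ) (hg : Measurable g) (B : ℝ) (hgb : ∀ x, |g x| ≤ B) (k : ℕ) (u : H) :
    FK P S η V (k+1) g u = FK P S η V k (msQ S V (Measure.map (η 1) P) g) u := by
  have hlaw := ms_law_eq P e η hηmeas b ξ p hD
  obtain ⟨hb0, hbs, hη, hξm, hind, -⟩ := hD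
  have hη' : ∀ (I : Set (ℕ × ℕ)) (n : ℕ), (∀ j, (j, n) ∈ I) →
      Measurable[⨆ jk ∈ I, MeasurableSpace.comap (ξ jk.1 jk.2) inferInstance] (η n) := by
    intro I n h
    have := ms_tail_meas e η b ξ hη 0 n I fun j _ => h j
    simpa using this
  let Y : Ω → H × ℝ := fun ω => (traj S η (fun _ => u) k ω,
    ∑ n ∈ Finset.Icc 1 k, V (traj S η (fun _ => u) n ω))
  have hYm : Measurable[⨆ jk ∈ {jk : ℕ × ℕ | jk.2 ≤ k},
      MeasurableSpace.comap (ξ jk.1 jk.2) inferInstance] Y :=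
    ms_past_meas S hS e η b ξ hη V hV k u
  have hY : Measurable Y := hYm.mono (iSup₂_le fun jk _ => (hξm jk.1 jk.2).comap_le) le_rfl
  have hYη : IndepFun Y (η (k+1)) P := by
    have h0 := indep_iSup_of_disjoint (fun jk : ℕ × ℕ => (hξm jk.1 jk.2).comap_le) hind
      (S := {jk | jk.2 ≤ k}) (T := {jk | jk.2 = k+1})
      (Set.disjoint_left.2 fun x hx hx' => by simp at hx hx'; omega)
    rw [IndepFun_iff_Indep]
    refine indep_of_indep_of_le_left (indep_of_indep_of_le_right h0 ?_) ?_
    · rw [← measurable_iff_comap_le]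
      exact hη' _ _ fun j => rfl
    · rw [← measurable_iff_comap_le]
      exact hYm
  let ψ : (H × ℝ) × H → ℝ := fun x =>
    (g (S x.1.1 + x.2) * Real.exp (V (S x.1.1 + x.2))) * Real.exp x.1.2
  have hψ : Measurable ψ := by fun_prop
  have hprod := (indepFun_iff_map_prod_eq_prod_map_map hY.aemeasurable
    (hηmeas (k+1)).aemeasurable).1 hYη
  have hpY : IsProbabilityMeasure (Measure.map Y P) := Measure.isProbabilityMeasure_map hY.aemeasurable
  have hpη : IsProbabilityMeasure (Measure.map (η 1) P) :=
    Measure.isProbabilityMeasure_map (hηmeas 1).aemeasurable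
  have hB : 0 ≤ B := (abs_nonneg _).trans (hgb 0)
  have hYη' : Measurable (fun ω => (Y ω, η (k+1) ω)) := hY.prodMk (hηmeas (k+1))
  have hint : Integrable ψ ((Measure.map Y P).prod (Measure.map (η 1) P)) := by
    rw [← hlaw (k+1), ← hprod, integrable_map_measure hψ.aestronglyMeasurable hYη'.aemeasurable]
    refine Integrable.of_bound (hψ.comp hYη').aestronglyMeasurable
      (B * Real.exp Λ * Real.exp (∑ n ∈ Finset.Icc 1 k, Λ)) (ae_of_all _ fun ω => ?_)
    simp only [Function.comp, ψ, Y]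
    rw [Real.norm_eq_abs, abs_mul, abs_mul, Real.abs_exp, Real.abs_exp]
    gcongr
    · exact hgb _
    · exact (le_abs_self _).trans (hVb _)
    · exact (le_abs_self _).trans (hVb _)
  have h1 : FK P S η V (k+1) g u = ∫ ω, ψ (Y ω, η (k+1) ω) ∂P := by
    unfold FK
    refine integral_congr_ae (ae_of_all _ fun ω => ?_)
    simp only [ψ, Y]
    rw [Finset.sum_Icc_succ_top (by omega), Real.exp_add]
    simp only [traj]
    ring
  rw [h1, ← integral_map (φ := fun ω => (Y ω, η (k+1) ω)) (f := ψ) hYη'.aemeasurable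
    hψ.aestronglyMeasurable, hprod, hlaw (k+1), integral_prod _ hint]
  have hinner : ∀ y : H × ℝ, ∫ z, ψ (y, z) ∂(Measure.map (η 1) P) =
      msQ S V (Measure.map (η 1) P) g y.1 * Real.exp y.2 := by
    intro y
    simp only [ψ, msQ]
    rw [integral_mul_const]
  simp_rw [hinner]
  rw [integral_map hY.aemeasurable]
  · rfl
  · apply Measurable.aestronglyMeasurable
    have := msQ_meas S hS V hV (Measure.map (η 1) P) g hg
    fun_prop

lemma msFK_eq [SecondCountableTopology H] [MeasurableSpace H] [BorelSpace H]
    {Ω : Type} [MeasurableSpace Ω] (P : Measure Ω) [IsProbabilityMeasure P]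
    (S : H → H) (hS : Measurable S)
    (e : HilbertBasis ℕ ℝ H) (η : ℕ → Ω → H) (hηmeas : ∀ k, Measurable (η k))
    (b : ℕ → ℝ) (ξ : ℕ → ℕ → Ω → ℝ) (p : ℕ → ℝ → ℝ) (hD : CondD P e η b ξ p)
    (V : H → ℝ) (hV : Measurable V) (Λ : ℝ) (hVb : ∀ x, |V x| ≤ Λ) (k : ℕ) :
    ∀ (g : H → ℝ) (_ : Measurable g) (B : ℝ) (_ : ∀ x, |g x| ≤ B) (u : H),
    FK P S η V k g u = (msQ S V (Measure.map (η 1) P))^[k] g u := by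
  have hpη : IsProbabilityMeasure (Measure.map (η 1) P) :=
    Measure.isProbabilityMeasure_map (hηmeas 1).aemeasurable
  induction k with
  | zero => intro g _ B _ u; simp [FK, traj]
  | succ k ih =>
    intro g hg B hgb u
    rw [msFK_succ P S hS e η hηmeas b ξ p hD V hV Λ hVb g hg B hgb, Function.iterate_succ_apply]
    exact ih _ (msQ_meas S hS V hV _ g hg) _ (msQ_bdd S V Λ hVb _ g B hgb) u

lemma msIter_prop [SecondCountableTopology H] [MeasurableSpace H] [BorelSpace H]
    (S : H → H) (hS : Measurable S) (V : H → ℝ) (hV : Measurable V) (Λ : ℝ) (hVb : ∀ x, |V x| ≤ Λ)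
    (μ : Measure H) [IsProbabilityMeasure μ] (g : H → ℝ) (hg : Measurable g)
    (B : ℝ) (hgb : ∀ x, |g x| ≤ B) (k : ℕ) :
    Measurable ((msQ S V μ)^[k] g) ∧ ∃ B', ∀ x, |(msQ S V μ)^[k] g x| ≤ B' := by
  induction k with
  | zero => exact ⟨hg, B, hgb⟩
  | succ k ih =>
    obtain ⟨h1, B', h2⟩ := ih
    rw [Function.iterate_succ_apply']
    exact ⟨msQ_meas S hS V hV _ _ h1, _, msQ_bdd S V Λ hVb _ _ B' h2⟩

lemma ms_wd_integral (N : ℕ) (r : (Fin N → ℝ) → ℝ) (hr : Continuous r) (hr0 : ∀ x, 0 ≤ r x)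
    (φ : (Fin N → ℝ) → ℝ) :
    ∫ x, φ x ∂((volume : Measure (Fin N → ℝ)).withDensity fun x => ENNReal.ofReal (r x))
      = ∫ x, φ x * r x := by
  rw [integral_withDensity_eq_integral_toReal_smul (by fun_prop)
    (ae_of_all _ fun x => ENNReal.ofReal_lt_top)]
  refine integral_congr_ae (ae_of_all _ fun x => ?_)
  simp only [ENNReal.toReal_ofReal (hr0 x), smul_eq_mul]
  ring

lemma ms_inner [SecondCountableTopology H] [MeasurableSpace H] [BorelSpace H]
    (e : HilbertBasis ℕ ℝ H) (b : ℕ → ℝ) (hb : ∀ j, b j ≠ 0) (N : ℕ)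
    (r : (Fin N → ℝ) → ℝ) (hr : Continuous r) (hr0 : ∀ x, 0 ≤ r x)
    (hrs : ∀ x, r x ≠ 0 → ‖x‖ ≤ 1) (D : ℝ) (hD0 : 0 ≤ D) (hD : ∀ x y, |r x - r y| ≤ D * ‖x - y‖)
    (hr1 : ∫ x, r x = 1)
    (A : Set H) (h : H → ℝ) (hh : Measurable h) (Bh : ℝ) (hBh : ∀ x, |h x| ≤ Bh)
    (M L : ℝ) (hL : 0 ≤ L) (hM : ∀ z ∈ A, |h z| ≤ M)
    (hlip : ∀ z ∈ A, ∀ z' ∈ A, (∀ j < N, e.repr z j = e.repr z' j) → |h z - h z'| ≤ L * ‖z - z'‖)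
    (v v' w : H) (hv : ∀ᵐ x : Fin N → ℝ, r x ≠ 0 → v + msT e b N x + w ∈ A)
    (hv' : ∀ᵐ x : Fin N → ℝ, r x ≠ 0 → v' + msT e b N x + w ∈ A) :
    |(∫ x, h (v + msT e b N x + w) * r x) - ∫ x, h (v' + msT e b N x + w) * r x|
      ≤ L * ‖(v - v') - projB e N (v - v')‖ +
        M * (D * ‖(fun j : Fin N => e.repr (v - v') j / b j)‖ *
          (2 * (volume (Metric.closedBall (0 : Fin N → ℝ) 1)).toReal)) := by
  have hTm := (msT_cont e b N).measurable
  let co : H → (Fin N → ℝ) := fun v j => e.repr v j / b j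
  have hco : ∀ v, msT e b N (co v) = projB e N v := by
    intro v
    simp only [msT, projB, co]
    rw [Finset.sum_range (fun j => e.repr v j • (e j : H))]
    refine Finset.sum_congr rfl fun j _ => ?_
    congr 1
    field_simp [hb j]
  have hTsub : ∀ x y, msT e b N (x - y) = msT e b N x - msT e b N y := by
    intro x y
    simp only [msT, Pi.sub_apply, mul_sub, sub_smul, Finset.sum_sub_distrib]
  have hPsub : ∀ x y, projB e N (x - y) = projB e N x - projB e N y := by
    intro x y
    rw [← hco, ← hco, ← hco, ← hTsub]
    congr 1
    funext j
    simp only [co, map_sub, lp.coeFn_sub, Pi.sub_apply, sub_div]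
  have hP : ∀ v, ∀ j < N, e.repr (v - projB e N v) j = 0 := by
    intro v j hj
    rw [map_sub, lp.coeFn_sub, Pi.sub_apply]
    have : e.repr (projB e N v) j = e.repr v j := by
      unfold projB
      rw [e.repr_apply_apply, inner_sum]
      rw [Finset.sum_eq_single j]
      · rw [inner_smul_right, real_inner_self_eq_norm_sq, e.orthonormal.1 j]; simp
      · intro i _ hij
        rw [inner_smul_right, e.orthonormal.2 (Ne.symm hij), mul_zero]
      · intro h; exact absurd (Finset.mem_range.2 hj) h
    rw [this, sub_self]
  -- shift
  have hshift : ∀ v, ∫ x, h (v + msT e b N x + w) * r x =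
      ∫ x, h ((v - projB e N v) + msT e b N x + w) * r (x - co v) := by
    intro v
    rw [← integral_sub_right_eq_self (fun x => h (v + msT e b N x + w) * r x) (co v)]
    refine integral_congr_ae (ae_of_all _ fun x => ?_)
    simp only [hTsub, hco]
    congr 2
    abel
  have hae : ∀ v, (∀ᵐ x : Fin N → ℝ, r x ≠ 0 → v + msT e b N x + w ∈ A) →
      ∀ᵐ x : Fin N → ℝ, r (x - co v) ≠ 0 → (v - projB e N v) + msT e b N x + w ∈ A := by
    intro v hv
    have h1 := (measurePreserving_sub_right (volume : Measure (Fin N → ℝ)) (co v)).quasiMeasurePreserving.ae hv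
    filter_upwards [h1] with x hx hx'
    have := hx hx'
    rw [hTsub, hco] at this
    convert this using 1
    abel
  have hri : Integrable r := by
    by_contra hcon
    rw [integral_undef hcon] at hr1
    exact zero_ne_one hr1
  have hris : ∀ a, Integrable (fun x => r (x - a)) := fun a => hri.comp_sub_right a
  have hint : ∀ v, Integrable (fun x => h ((v - projB e N v) + msT e b N x + w) * r (x - co v)) := by
    intro v
    refine (hris (co v)).bdd_mul (c := Bh) ?_ (ae_of_all _ fun x => hBh _)
    apply Measurable.aestronglyMeasurable
    fun_prop
  rw [hshift v, hshift v', ← integral_sub (hint v) (hint v')]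
  set c : ℝ := D * ‖co v - co v'‖ with hc
  have hc0 : 0 ≤ c := by positivity
  let Bl : (Fin N → ℝ) → Set (Fin N → ℝ) := fun a => Metric.closedBall a 1
  let ind : (Fin N → ℝ) → (Fin N → ℝ) → ℝ := fun a => (Bl a).indicator fun _ => (1:ℝ)
  have hind : ∀ a, Integrable (ind a) := by
    intro a
    refine (integrable_indicator_iff Metric.isClosed_closedBall.measurableSet).2 ?_
    exact integrableOn_const (isCompact_closedBall a 1).measure_lt_top.ne
  have hindi : ∀ a, ∫ x, ind a x = (volume (Metric.closedBall (0 : Fin N → ℝ) 1)).toReal := by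
    intro a
    simp only [ind, Bl]
    rw [integral_indicator Metric.isClosed_closedBall.measurableSet, setIntegral_const]
    simp only [smul_eq_mul, mul_one, measureReal_def]
    rw [Measure.addHaar_closedBall_center]
  have hind0 : ∀ a x, 0 ≤ ind a x := fun a x => Set.indicator_nonneg (fun _ _ => zero_le_one) x
  have hind1 : ∀ a x, r (x - a) ≠ 0 → ind a x = 1 := by
    intro a x hx
    refine Set.indicator_of_mem ?_ _
    have := hrs _ hx
    rwa [← dist_eq_norm] at this
  have hdiff : ∀ x, |r (x - co v) - r (x - co v')| ≤ c * (ind (co v) x + ind (co v') x) := by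
    intro x
    have h1 : |r (x - co v) - r (x - co v')| ≤ c := by
      have := hD (x - co v) (x - co v')
      rwa [sub_sub_sub_cancel_left, norm_sub_rev] at this
    by_cases h2 : r (x - co v) = 0
    · by_cases h3 : r (x - co v') = 0
      · rw [h2, h3, sub_self, abs_zero]
        have := hind0 (co v) x; have := hind0 (co v') x; positivity
      · rw [hind1 _ _ h3]
        have := hind0 (co v) x
        nlinarith
    · rw [hind1 _ _ h2]
      have := hind0 (co v') x
      nlinarith
  set d : ℝ := ‖(v - v') - projB e N (v - v')‖ with hd
  have hdz : (v - projB e N v) - (v' - projB e N v') = (v - v') - projB e N (v - v') := by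
    rw [hPsub]; abel
  have hcov : co v - co v' = fun j : Fin N => e.repr (v - v') j / b j := by
    funext j
    simp only [co, Pi.sub_apply, map_sub, lp.coeFn_sub, sub_div]
  have hpt : ∀ᵐ x : Fin N → ℝ, ‖h ((v - projB e N v) + msT e b N x + w) * r (x - co v) -
      h ((v' - projB e N v') + msT e b N x + w) * r (x - co v')‖ ≤
      L * d * r (x - co v) + M * (c * (ind (co v) x + ind (co v') x)) := by
    filter_upwards [hae v hv, hae v' hv'] with x h1 h2
    rw [Real.norm_eq_abs]
    set z := (v - projB e N v) + msT e b N x + w with hz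
    set z' := (v' - projB e N v') + msT e b N x + w with hz'
    set s := r (x - co v)
    set s' := r (x - co v')
    have hs : 0 ≤ s := hr0 _
    have hs' : 0 ≤ s' := hr0 _
    have hdd := hdiff x
    have hd0 : 0 ≤ d := norm_nonneg _
    have key : |h z * s - h z' * s'| ≤ L * d * s + M * |s - s'| := by
      by_cases hs1 : s = 0
      · by_cases hs2 : s' = 0
        · simp [hs1, hs2]
        · rw [hs1]
          have := hM z' (h2 hs2)
          simp only [mul_zero, zero_sub, abs_neg, zero_add, abs_mul]
          gcongr
      · by_cases hs2 : s' = 0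
        · rw [hs2]
          have := hM z (h1 hs1)
          simp only [mul_zero, sub_zero, abs_mul]
          have h3 : 0 ≤ L * d * s := by positivity
          have h4 : |h z| * |s| ≤ M * |s| := by gcongr
          linarith
        · have hzA := h1 hs1
          have hzA' := h2 hs2
          have hdist : z - z' = (v - v') - projB e N (v - v') := by
            rw [← hdz, hz, hz']; abel
          have hcoor : ∀ j < N, e.repr z j = e.repr z' j := by
            intro j hj
            have h5 := hP (v - v') j hj
            rw [← hdist, map_sub, lp.coeFn_sub, Pi.sub_apply] at h5
            linarith
          have h6 := hlip z hzA z' hzA' hcoor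
          rw [hdist, ← hd] at h6
          have h7 := hM z' hzA'
          have : h z * s - h z' * s' = (h z - h z') * s + h z' * (s - s') := by ring
          rw [this]
          calc _ ≤ |(h z - h z') * s| + |h z' * (s - s')| := abs_add_le _ _
            _ = |h z - h z'| * s + |h z'| * |s - s'| := by
              rw [abs_mul, abs_mul, abs_of_nonneg hs]
            _ ≤ _ := by gcongr
    by_cases hs3 : s = 0 ∧ s' = 0
    · have hM' : h z * s - h z' * s' = 0 := by rw [hs3.1, hs3.2]; ring
      rw [hM', abs_zero, hs3.1]
      -- M may be negative only if A is empty
      by_cases hMn : 0 ≤ M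
      · have := hind0 (co v) x; have := hind0 (co v') x; positivity
      · exfalso
        have hAe : A = ∅ := by
          by_contra hne
          obtain ⟨z, hz⟩ := Set.nonempty_iff_ne_empty.2 hne
          exact hMn ((abs_nonneg _).trans (hM z hz))
        have hz0 : ∀ᵐ x : Fin N → ℝ, r x = 0 := by
          filter_upwards [hv] with x hx
          by_contra hcon
          have := hx hcon
          rw [hAe] at this
          exact this
        rw [integral_congr_ae hz0] at hr1
        simp at hr1
    · have hM0 : 0 ≤ M := by
        by_cases hs1 : s = 0
        · exact (abs_nonneg _).trans (hM z' (h2 fun h => hs3 ⟨hs1, h⟩))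
        · exact (abs_nonneg _).trans (hM z (h1 hs1))
      refine key.trans ?_
      gcongr
  have hbi : Integrable (fun x => L * d * r (x - co v) + M * (c * (ind (co v) x + ind (co v') x))) :=
    ((hris _).const_mul _).add ((((hind _).add (hind _)).const_mul c).const_mul M)
  have hfin := norm_integral_le_of_norm_le hbi hpt
  rw [Real.norm_eq_abs] at hfin
  refine hfin.trans (le_of_eq ?_)
  have hi2 : Integrable (fun x => M * (c * (ind (co v) x + ind (co v') x))) :=
    (((hind _).add (hind _)).const_mul c).const_mul M
  rw [integral_add ((hris _).const_mul _) hi2,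
    integral_const_mul, integral_const_mul, integral_const_mul, integral_add (hind _) (hind _), hindi, hindi,
    integral_sub_right_eq_self r, hr1, hc, hcov]
  ring

lemma ms_onestep [SecondCountableTopology H] [MeasurableSpace H] [BorelSpace H]
    (e : HilbertBasis ℕ ℝ H) (b : ℕ → ℝ) (hb : ∀ j, b j ≠ 0) (N : ℕ)
    (r : (Fin N → ℝ) → ℝ) (hr : Continuous r) (hr0 : ∀ x, 0 ≤ r x)
    (hrs : ∀ x, r x ≠ 0 → ‖x‖ ≤ 1) (D : ℝ) (hD0 : 0 ≤ D) (hD : ∀ x y, |r x - r y| ≤ D * ‖x - y‖)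
    (hpr : IsProbabilityMeasure ((volume : Measure (Fin N → ℝ)).withDensity
        fun x => ENNReal.ofReal (r x)))
    (l : Measure H) (hl : IsProbabilityMeasure l) (μ : Measure H) (hpμ : IsProbabilityMeasure μ)
    (hμ : μ = Measure.map (fun z : (Fin N → ℝ) × H => msT e b N z.1 + z.2)
        (((volume : Measure (Fin N → ℝ)).withDensity fun x => ENNReal.ofReal (r x)).prod l))
    (K : Set H) (hKm : MeasurableSet K) (hK : ∀ᵐ z ∂μ, z ∈ K)
    (A : Set H) (S : H → H) (hKA : ∀ u ∈ A, ∀ z ∈ K, S u + z ∈ A)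
    (V : H → ℝ) (hV : Measurable V) (Λ : ℝ) (hVb : ∀ x, |V x| ≤ Λ)
    (hVN : ∀ z ∈ A, ∀ z' ∈ A, (∀ j < N, e.repr z j = e.repr z' j) → V z = V z')
    (g : H → ℝ) (hg : Measurable g) (Bg : ℝ) (hBg : ∀ x, |g x| ≤ Bg)
    (M L : ℝ) (hL : 0 ≤ L) (hM : ∀ z ∈ A, |g z| ≤ M)
    (hlip : ∀ z ∈ A, ∀ z' ∈ A, (∀ j < N, e.repr z j = e.repr z' j) → |g z - g z'| ≤ L * ‖z - z'‖)
    (u u' : H) (hu : u ∈ A) (hu' : u' ∈ A) :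
    |msQ S V μ g u - msQ S V μ g u'|
      ≤ (Real.exp Λ * L) * ‖(S u - S u') - projB e N (S u - S u')‖ +
        (Real.exp Λ * M) * (D * ‖(fun j : Fin N => e.repr (S u - S u') j / b j)‖ *
          (2 * (volume (Metric.closedBall (0 : Fin N → ℝ) 1)).toReal)) := by
  have hTm := (msT_cont e b N).measurable
  have hΦ : Measurable (fun z : (Fin N → ℝ) × H => msT e b N z.1 + z.2) := by fun_prop
  let h : H → ℝ := fun z => g z * Real.exp (V z)
  have hh : Measurable h := by fun_prop
  have hM0 : 0 ≤ M := (abs_nonneg _).trans (hM u hu)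
  have hexp : ∀ z, Real.exp (V z) ≤ Real.exp Λ := fun z =>
    Real.exp_le_exp.2 ((le_abs_self _).trans (hVb z))
  have hBg0 : 0 ≤ Bg := (abs_nonneg _).trans (hBg u)
  have hBh : ∀ x, |h x| ≤ Bg * Real.exp Λ := by
    intro x
    simp only [h]
    rw [abs_mul, Real.abs_exp]
    exact mul_le_mul (hBg x) (hexp x) (Real.exp_pos _).le hBg0
  have hMh : ∀ z ∈ A, |h z| ≤ Real.exp Λ * M := by
    intro z hz
    simp only [h]
    rw [abs_mul, Real.abs_exp, mul_comm]
    exact mul_le_mul (hexp z) (hM z hz) (abs_nonneg _) (Real.exp_pos _).le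
  have hLh : ∀ z ∈ A, ∀ z' ∈ A, (∀ j < N, e.repr z j = e.repr z' j) →
      |h z - h z'| ≤ Real.exp Λ * L * ‖z - z'‖ := by
    intro z hz z' hz' hj
    simp only [h]
    rw [hVN z hz z' hz' hj, ← sub_mul, abs_mul, Real.abs_exp, mul_comm, mul_assoc]
    exact mul_le_mul (hexp z') (hlip z hz z' hz' hj) (abs_nonneg _) (Real.exp_pos _).le
  have hr1 : ∫ x, r x = 1 := by
    have := ms_wd_integral N r hr hr0 (fun _ => 1)
    simp only [one_mul] at this
    rw [← this]
    simp
  have hae : ∀ u ∈ A, ∀ᵐ w ∂l, ∀ᵐ x : Fin N → ℝ, r x ≠ 0 → S u + msT e b N x + w ∈ A := by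
    intro u hu
    rw [hμ] at hK
    have hK' := ae_of_ae_map hΦ.aemeasurable hK
    have h1 := Measure.ae_ae_of_ae_prod (Measure.measurePreserving_swap.quasiMeasurePreserving.ae hK')
    filter_upwards [h1] with w hw
    rw [ae_withDensity_iff (by fun_prop)] at hw
    filter_upwards [hw] with x hx hrx
    have h2 : ENNReal.ofReal (r x) ≠ 0 := by
      rw [Ne, ENNReal.ofReal_eq_zero, not_le]
      exact lt_of_le_of_ne (hr0 x) (Ne.symm hrx)
    have h3 := hKA u hu _ (hx h2)
    rw [add_assoc]
    exact h3
  have hF : ∀ u, Integrable (fun z : (Fin N → ℝ) × H => h (S u + (msT e b N z.1 + z.2)))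
      (((volume : Measure (Fin N → ℝ)).withDensity fun x => ENNReal.ofReal (r x)).prod l) := by
    intro u
    refine Integrable.of_bound ?_ (Bg * Real.exp Λ) (ae_of_all _ fun x => hBh _)
    apply Measurable.aestronglyMeasurable
    fun_prop
  have hin : ∀ u w, ∫ x, h (S u + (msT e b N x + w)) ∂((volume : Measure (Fin N → ℝ)).withDensity
      fun x => ENNReal.ofReal (r x)) = ∫ x, h (S u + msT e b N x + w) * r x := by
    intro u w
    rw [ms_wd_integral N r hr hr0]
    simp_rw [add_assoc]
  have hQ : ∀ u, msQ S V μ g u = ∫ w, (∫ x, h (S u + msT e b N x + w) * r x) ∂l := by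
    intro u
    have : msQ S V μ g u = ∫ z, h (S u + z) ∂μ := rfl
    rw [this, hμ, integral_map hΦ.aemeasurable (by
      apply Measurable.aestronglyMeasurable; fun_prop), integral_prod_symm _ (hF u)]
    refine integral_congr_ae (ae_of_all _ fun w => ?_)
    exact hin u w
  have hIi : ∀ u, Integrable (fun w => ∫ x, h (S u + msT e b N x + w) * r x) l := by
    intro u
    have := (hF u).integral_prod_right
    refine this.congr (ae_of_all _ fun w => ?_)
    exact hin u w
  rw [hQ u, hQ u', ← integral_sub (hIi u) (hIi u'), ← Real.norm_eq_abs]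
  have hfin : ∀ᵐ w ∂l, ‖(∫ x, h (S u + msT e b N x + w) * r x) -
      ∫ x, h (S u' + msT e b N x + w) * r x‖ ≤
      (Real.exp Λ * L) * ‖(S u - S u') - projB e N (S u - S u')‖ +
        (Real.exp Λ * M) * (D * ‖(fun j : Fin N => e.repr (S u - S u') j / b j)‖ *
          (2 * (volume (Metric.closedBall (0 : Fin N → ℝ) 1)).toReal)) := by
    filter_upwards [hae u hu, hae u' hu'] with w hw hw'
    rw [Real.norm_eq_abs]
    exact ms_inner e b hb N r hr hr0 hrs D hD0 hD hr1 A h hh _ hBh _ _ (by positivity) hMh hLh (S u) (S u') w hw hw'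
  have hfin2 := norm_integral_le_of_norm_le_const hfin
  rwa [probReal_univ, mul_one] at hfin2


lemma msQ_mono [SecondCountableTopology H] [MeasurableSpace H] [BorelSpace H]
    (μ : Measure H) [IsProbabilityMeasure μ]
    (K : Set H) (hK : ∀ᵐ z ∂μ, z ∈ K)
    (A : Set H) (S : H → H) (hS : Measurable S) (hKA : ∀ u ∈ A, ∀ z ∈ K, S u + z ∈ A)
    (V : H → ℝ) (hV : Measurable V) (Λ : ℝ) (hVb : ∀ x, |V x| ≤ Λ)
    (f g : H → ℝ) (hf : Measurable f) (hg : Measurable g)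
    (Bf : ℝ) (hBf : ∀ x, |f x| ≤ Bf) (Bg : ℝ) (hBg : ∀ x, |g x| ≤ Bg) (c : ℝ)
    (hfg : ∀ x ∈ A, f x ≤ c * g x) (u : H) (hu : u ∈ A) :
    msQ S V μ f u ≤ c * msQ S V μ g u := by
  have hi : ∀ (f : H → ℝ), Measurable f → ∀ B, (∀ x, |f x| ≤ B) →
      Integrable (fun z => f (S u + z) * Real.exp (V (S u + z))) μ := by
    intro f hf B hB
    refine Integrable.of_bound ?_ (B * Real.exp Λ) (ae_of_all _ fun z => ?_)
    · apply Measurable.aestronglyMeasurable; fun_prop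
    · rw [Real.norm_eq_abs, abs_mul, Real.abs_exp]
      exact mul_le_mul (hB _) (Real.exp_le_exp.2 ((le_abs_self _).trans (hVb _))) (Real.exp_pos _).le
        ((abs_nonneg _).trans (hB 0))
  unfold msQ
  rw [← integral_const_mul]
  refine integral_mono_ae (hi f hf Bf hBf) ((hi g hg Bg hBg).const_mul c) ?_
  filter_upwards [hK] with z hz
  have := hfg _ (hKA u hu z hz)
  calc _ ≤ (c * g (S u + z)) * Real.exp (V (S u + z)) := by gcongr
    _ = _ := by ring

/-- **Theorem 4.1 (uniform Feller property)**: under Conditions (A)–(D) with `b_j ≠ 0`, for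
every `V ∈ 𝒱` and every `f ∈ 𝒞 = 𝒱 ∩ C₊(𝒜)`, the sequence of normalised functions
`{‖𝔓_k^V f‖_∞⁻¹ 𝔓_k^V f, k ≥ 0}` is uniformly equicontinuous on `𝒜`. -/
theorem statement6
    {H : Type} [NormedAddCommGroup H] [InnerProductSpace ℝ H] [CompleteSpace H]
    [SecondCountableTopology H] [MeasurableSpace H] [BorelSpace H]
    {Ω : Type} [MeasurableSpace Ω] (P : Measure Ω) [IsProbabilityMeasure P]
    (S : H → H) (e : HilbertBasis ℕ ℝ H)
    (η : ℕ → Ω → H) (hηmeas : ∀ k, Measurable (η k))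
    (b : ℕ → ℝ) (ξ : ℕ → ℕ → Ω → ℝ) (p : ℕ → ℝ → ℝ)
    (K : Set H) (hK : K = msupp (Measure.map (η 1) P)) (hKcomp : IsCompact K)
    (hA : CondA S) (hB : CondB S K) (hC : CondC S e) (hD : CondD P e η b ξ p)
    (hb : ∀ j, b j ≠ 0)
    -- `V ∈ 𝒱`
    (V : H →ᵇ ℝ)
    (hV : ∃ N : ℕ, ∃ F : H → ℝ, Continuous F ∧
      ∀ u ∈ attainDom S K ({0} : Set H), V u = F (projB e N u))
    -- `f ∈ 𝒞 = 𝒱 ∩ C₊(𝒜)`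
    (f : H →ᵇ ℝ)
    (hf𝒱 : ∃ N : ℕ, ∃ F : H → ℝ, Continuous F ∧
      ∀ u ∈ attainDom S K ({0} : Set H), f u = F (projB e N u))
    (hfpos : ∀ x ∈ attainDom S K ({0} : Set H), 0 < f x) :
    UniformEquicontinuousOn
      (fun (k : ℕ) (u : H) =>
        (supOn (attainDom S K ({0} : Set H)) (FK P S η (⇑V) k (⇑f)))⁻¹ *
          FK P S η (⇑V) k (⇑f) u)
      (attainDom S K ({0} : Set H)) := by
  have hSc : Continuous S := hA.1.continuous
  have hSm : Measurable S := hSc.measurable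
  have hpμ : IsProbabilityMeasure (Measure.map (η 1) P) :=
    Measure.isProbabilityMeasure_map (hηmeas 1).aemeasurable
  have hAc := attainDom_compact S e K hKcomp hA hB hC
  have hA0 := zero_mem_attainDom S K
  have hinv : ∀ u ∈ attainDom S K ({0} : Set H), ∀ z ∈ K, S u + z ∈ attainDom S K ({0} : Set H) :=
    fun u hu z hz => attainDom_inv S hSc K u hu z hz
  obtain ⟨R, hR, hAR⟩ := attainDom_bdd S hSc K hKcomp hB
  set A : Set H := attainDom S K ({0} : Set H) with hAdef
  have hKae : ∀ᵐ z ∂(Measure.map (η 1) P), z ∈ K := by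
    have h1 : (Measure.map (η 1) P).support ∈ ae (Measure.map (η 1) P) := Measure.support_mem_ae
    filter_upwards [h1] with z hz
    rw [hK]
    exact (Measure.mem_support_iff_forall z).1 hz
  have hKm : MeasurableSet K := hKcomp.measurableSet
  have hVm : Measurable V := V.continuous.measurable
  have hfm : Measurable f := f.continuous.measurable
  have hVb : ∀ x, |V x| ≤ ‖V‖ := fun x => V.norm_coe_le_norm x
  have hfb : ∀ x, |f x| ≤ ‖f‖ := fun x => f.norm_coe_le_norm x
  set Λ := ‖V‖
  set μ := Measure.map (η 1) P with hμdef
  let G : ℕ → H → ℝ := fun k => (msQ S V μ)^[k] f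
  have hG : ∀ k, FK P S η V k f = G k := by
    intro k
    funext u
    exact msFK_eq P S hSm e η hηmeas b ξ p hD V hVm Λ hVb k f hfm _ hfb u
  have hGs : ∀ k, G (k+1) = msQ S V μ (G k) := fun k => Function.iterate_succ_apply' _ _ _
  have hGp : ∀ k, Measurable (G k) ∧ ∃ B', ∀ x, |G k x| ≤ B' :=
    fun k => msIter_prop S hSm V hVm Λ hVb μ f hfm _ hfb k
  have hG0 : ∀ k, ∀ x ∈ A, 0 ≤ G k x := by
    intro k
    induction k with
    | zero => intro x hx; exact (hfpos x hx).le
    | succ k ih =>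
      intro x hx
      obtain ⟨h1, B', h2⟩ := hGp k
      have h3 := msQ_mono μ K hKae A S hSm hinv V hVm Λ hVb (fun _ => 0) (G k) measurable_const h1
        0 (by simp) B' h2 1 (by simpa using ih) x hx
      rw [hGs]
      simpa [msQ] using h3
  obtain ⟨x0, hx0, hmin⟩ := hAc.exists_isMinOn ⟨0, hA0⟩ f.continuous.continuousOn
  have hm := hfpos x0 hx0
  set m := f x0
  have hmle : ∀ x ∈ A, m ≤ f x := fun x hx => hmin hx
  have hfn : 0 < ‖f‖ := lt_of_lt_of_le hm ((le_abs_self _).trans (hfb x0))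
  obtain ⟨κ, hκdef⟩ : ∃ κ, κ = ‖f‖ / m * Real.exp Λ := ⟨_, rfl⟩
  have hκ : 0 < κ := by rw [hκdef]; positivity
  have hstep0 : ∀ x ∈ A, G 0 x ≤ κ * G 1 x := by
    intro x hx
    have h1 := msQ_mono μ K hKae A S hSm hinv V hVm Λ hVb (fun _ => 1) f measurable_const hfm
        1 (by simp) _ hfb (1/m) (by
          intro y hy
          have := hmle y hy
          rw [one_div, inv_mul_eq_div, one_le_div hm]; exact this) x hx
    have h2 : Real.exp (-Λ) ≤ msQ S V μ (fun _ => 1) x := by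
      have h3 : ∫ _, Real.exp (-Λ) ∂μ ≤ ∫ z, 1 * Real.exp (V (S x + z)) ∂μ := by
        refine integral_mono (integrable_const _) ?_ fun z => ?_
        · refine Integrable.of_bound ?_ (Real.exp Λ) (ae_of_all _ fun z => ?_)
          · apply Measurable.aestronglyMeasurable; fun_prop
          · rw [one_mul, Real.norm_eq_abs, Real.abs_exp]
            exact Real.exp_le_exp.2 ((le_abs_self _).trans (hVb _))
        · simp only [one_mul]
          exact Real.exp_le_exp.2 (neg_le_of_abs_le (hVb _))
      simpa [msQ] using h3
    have h4 : Real.exp (-Λ) * m ≤ G 1 x := by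
      have h5 := h2.trans h1
      rw [one_div, inv_mul_eq_div, le_div_iff₀ hm] at h5
      exact h5
    calc G 0 x ≤ ‖f‖ := (le_abs_self _).trans (hfb x)
      _ = κ * (Real.exp (-Λ) * m) := by
        rw [hκdef, Real.exp_neg]; field_simp
      _ ≤ κ * G 1 x := by gcongr
  have hstep : ∀ k, ∀ x ∈ A, G k x ≤ κ * G (k+1) x := by
    intro k
    induction k with
    | zero => exact hstep0
    | succ k ih =>
      intro x hx
      obtain ⟨h1, B1, h2⟩ := hGp k
      obtain ⟨h3, B2, h4⟩ := hGp (k+1)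
      rw [hGs k, hGs (k+1)]
      exact msQ_mono μ K hKae A S hSm hinv V hVm Λ hVb _ _ h1 h3 B1 h2 B2 h4 κ ih x hx
  let M : ℕ → ℝ := fun k => supOn A (G k)
  have hMle : ∀ k, ∀ x ∈ A, |G k x| ≤ M k := by
    intro k x hx
    obtain ⟨-, B', h2⟩ := hGp k
    exact le_ciSup (f := fun x : A => |G k x|) ⟨B', by rintro _ ⟨y, rfl⟩; exact h2 y⟩ ⟨x, hx⟩
  have : Nonempty A := ⟨⟨0, hA0⟩⟩
  have hMstep : ∀ k, M k ≤ κ * M (k+1) := by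
    intro k
    refine ciSup_le fun x => ?_
    rw [abs_of_nonneg (hG0 k x x.2)]
    refine (hstep k x x.2).trans ?_
    have := (le_abs_self _).trans (hMle (k+1) x x.2)
    gcongr
  have hMpos : ∀ k, 0 < M k := by
    intro k
    induction k with
    | zero => exact lt_of_lt_of_le (hfpos 0 hA0) ((le_abs_self _).trans (hMle 0 0 hA0))
    | succ k ih => exact pos_of_mul_pos_right (lt_of_lt_of_le ih (hMstep k)) hκ.le
  obtain ⟨C, hC0, a, -, -, n₀, -, hlip, -⟩ := hA.2 R (R/2) (by positivity) (by linarith)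
  obtain ⟨γ, hγ0, -, hγ, hsq⟩ := hC R hR
  obtain ⟨N1, F1, -, hF1⟩ := hV
  obtain ⟨N2, F2, -, hF2⟩ := hf𝒱
  obtain ⟨N, hN, hNN⟩ := (((tendsto_order.1 hγ).2 (1 / (2 * (Real.exp Λ * κ)))
    (by positivity)).and (eventually_ge_atTop (max N1 N2))).exists
  have hN1 : N1 ≤ N := (le_max_left _ _).trans hNN
  have hN2 : N2 ≤ N := (le_max_right _ _).trans hNN
  have hγN : Real.exp Λ * κ * γ N ≤ 1 / 2 := by
    rw [lt_div_iff₀ (by positivity)] at hN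
    linarith
  obtain ⟨r, l, hr, hr0, hrs, ⟨D, hD0, hDl⟩, hpl, hpr, hμ⟩ := ms_decomp P e η hηmeas b ξ p hD N
  let cb : ℝ := ∑ j : Fin N, |b j|⁻¹
  have hcb0 : 0 ≤ cb := Finset.sum_nonneg fun j _ => by positivity
  have hcb : ∀ v : H, ‖(fun j : Fin N => e.repr v j / b j)‖ ≤ cb * ‖v‖ := by
    intro v
    rw [pi_norm_le_iff_of_nonneg (by positivity)]
    intro j
    rw [Real.norm_eq_abs, abs_div, div_eq_inv_mul]
    refine mul_le_mul ?_ (abs_repr_le e v j) (abs_nonneg _) hcb0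
    exact Finset.single_le_sum (f := fun j : Fin N => |b j|⁻¹) (fun j _ => by positivity)
      (Finset.mem_univ j)
  obtain ⟨vol, hvol⟩ : ∃ vol, vol = (volume (Metric.closedBall (0 : Fin N → ℝ) 1)).toReal := ⟨_, rfl⟩
  have hvol0 : 0 ≤ vol := by rw [hvol]; positivity
  let C1 : ℝ := D * (cb * C) * (2 * vol)
  have hC1 : 0 ≤ C1 := by positivity
  let L : ℝ := 2 * Real.exp Λ * C1 * κ
  have hL : 0 ≤ L := by positivity
  have hone : ∀ k, (∀ z ∈ A, ∀ z' ∈ A, (∀ j < N, e.repr z j = e.repr z' j) →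
      |G k z - G k z'| ≤ L * M k * ‖z - z'‖) →
      ∀ u ∈ A, ∀ u' ∈ A, |G (k+1) u - G (k+1) u'| ≤ L * M (k+1) * ‖u - u'‖ := by
    intro k hk u hu u' hu'
    obtain ⟨h1, B1, h2⟩ := hGp k
    have hMk := hMpos k
    have key := ms_onestep e b hb N r hr hr0 hrs D hD0 hDl hpr l hpl μ hpμ hμ K hKm hKae A S hinv
      V hVm Λ hVb (by
        intro z hz z' hz' hj
        rw [hF1 z hz, hF1 z' hz', projB_eq_of_repr e N1 z z' fun j h => hj j (by omega)])
      (G k) h1 B1 h2 (M k) (L * M k) (by positivity) (hMle k) hk u u' hu hu'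
    rw [← hGs, ← hvol] at key
    have h3 := hsq N u (hAR hu) u' (hAR hu')
    have h4 : ‖(fun j : Fin N => e.repr (S u - S u') j / b j)‖ ≤ cb * (C * ‖u - u'‖) := by
      refine (hcb _).trans ?_
      have := hlip u (hAR hu) u' (hAR hu')
      gcongr
    have h5 := hMstep k
    set d := ‖u - u'‖ with hd
    have hd0 : 0 ≤ d := norm_nonneg _
    calc _ ≤ _ := key
      _ ≤ (Real.exp Λ * (L * M k)) * (γ N * d) +
        (Real.exp Λ * M k) * (D * (cb * (C * d)) * (2 * vol)) := by gcongr
      _ = Real.exp Λ * (γ N * L + C1) * d * M k := by simp only [C1]; ring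
      _ ≤ Real.exp Λ * (γ N * L + C1) * d * (κ * M (k+1)) := by
        have := (hγ0 N).le
        gcongr
      _ = ((Real.exp Λ * κ * γ N) * L + Real.exp Λ * κ * C1) * (d * M (k+1)) := by ring
      _ ≤ (1 / 2 * L + Real.exp Λ * κ * C1) * (d * M (k+1)) := by
        have := (hMpos (k+1)).le
        gcongr
      _ = L * M (k+1) * d := by simp only [L]; ring
  have hall : ∀ k, ∀ z ∈ A, ∀ z' ∈ A, (∀ j < N, e.repr z j = e.repr z' j) →
      |G k z - G k z'| ≤ L * M k * ‖z - z'‖ := by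
    intro k
    induction k with
    | zero =>
      intro z hz z' hz' hj
      have : G 0 z = G 0 z' := by
        change f z = f z'
        rw [hF2 z hz, hF2 z' hz', projB_eq_of_repr e N2 z z' fun j h => hj j (by omega)]
      rw [this, sub_self, abs_zero]
      have := hMpos 0
      positivity
    | succ k ih => intro z hz z' hz' _; exact hone k ih z hz z' hz'
  -- conclusion
  have huc : UniformContinuousOn f A := hAc.uniformContinuousOn_of_continuous f.continuous.continuousOn
  simp_rw [hG]
  rw [Metric.uniformity_basis_dist.uniformEquicontinuousOn_iff_right]
  intro ε hε
  rw [Metric.uniformContinuousOn_iff] at huc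
  obtain ⟨δ, hδ, hδf⟩ := huc (ε * M 0) (mul_pos hε (hMpos 0))
  have hbasis := Metric.uniformity_basis_dist (α := H)
  have hmem : {q : H × H | dist q.1 q.2 < min δ (ε / (L + 1))} ∈ uniformity H :=
    hbasis.mem_of_mem (lt_min hδ (by positivity))
  refine Filter.mem_of_superset (Filter.inter_mem_inf hmem (Filter.mem_principal_self (A ×ˢ A))) ?_
  rintro ⟨x, y⟩ ⟨hxy, hx, hy⟩ k
  simp only [Set.mem_setOf_eq] at hxy
  change dist ((M k)⁻¹ * G k x) ((M k)⁻¹ * G k y) < ε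
  have hMk := hMpos k
  rw [Real.dist_eq, ← mul_sub, abs_mul, abs_of_pos (inv_pos.2 hMk), inv_mul_lt_iff₀ hMk, mul_comm]
  cases k with
  | zero =>
    have := hδf x hx y hy (hxy.trans_le (min_le_left _ _))
    rwa [Real.dist_eq] at this
  | succ k =>
    have h1 := hone k (hall k) x hx y hy
    have h2 := hxy.trans_le (min_le_right _ _)
    rw [dist_eq_norm, lt_div_iff₀ (by positivity)] at h2
    have h3 := norm_nonneg (x - y)
    refine h1.trans_lt ?_
    have h4 : L * ‖x - y‖ < ε := by nlinarith
    calc L * M (k+1) * ‖x - y‖ = (L * ‖x - y‖) * M (k+1) := by ring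
      _ < ε * M (k+1) := by gcongr
end
end

section
/- Let P(u,Γ) be a generalised Markov kernel on a compact metric space X satisfying the uniform irreducibility property: for any r > 0 there exist an integer m ≥ 1 and p > 0 such that P_m(u, B(û,r)) ≥ p for all u, û ∈ X. If μ ∈ 𝒫(X) and λ > 0 satisfy 𝔓*μ = λμ, then μ(B(û,r)) ≥ λ^{-m} p > 0 for every û ∈ X and r > 0 (with m, p as above), and consequently the support of μ is all of X. -/
open MeasureTheory Filter Topology
open scoped ENNReal NNReal

noncomputable section

variable {X : Type} [MetricSpace X] [CompactSpace X] [MeasurableSpace X] [BorelSpace X]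

/-- The operator `𝔓 f (u) = ∫ f dP(u,·)` associated with a (generalised Markov) kernel. -/
def opP (P : X → FiniteMeasure X) (f : X → ℝ) (u : X) : ℝ :=
  ∫ v, f v ∂(P u : Measure X)

/-- Iterates `𝔓_k = 𝔓^k`. -/
def opIter (P : X → FiniteMeasure X) : ℕ → (X → ℝ) → X → ℝ
  | 0 => fun f => f
  | k + 1 => fun f => opP P (opIter P k f)

/-- Iterated kernels `P_k(u,·)`, `P_0(u,·) = δ_u`, `P_k(u,·) = ∫ P_{k-1}(u,dv) P(v,·)`. -/
def kIter (P : X → FiniteMeasure X) : ℕ → X → Measure X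
  | 0 => fun u => Measure.dirac u
  | k + 1 => fun u => (kIter P k u).bind fun v => (P v : Measure X)

/-- Iterates of the dual operator `𝔓* ν (Γ) = ∫ P(u,Γ) ν(du)`. -/
def dualIter (P : X → FiniteMeasure X) : ℕ → Measure X → Measure X
  | 0 => fun ν => ν
  | k + 1 => fun ν => (dualIter P k ν).bind fun v => (P v : Measure X)

/-- sup-norm of a function on `X`. -/
def supN (g : X → ℝ) : ℝ := ⨆ x, |g x|

/-- A determining family: two finite non-negative Borel measures assigning equal integrals to
all members coincide. -/
def Determining (C : Set (X → ℝ)) : Prop :=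
  ∀ μ ν : Measure X, IsFiniteMeasure μ → IsFiniteMeasure ν →
    (∀ f ∈ C, ∫ x, f x ∂μ = ∫ x, f x ∂ν) → μ = ν

/-- Uniform irreducibility of a generalised Markov kernel. -/
def UnifIrred (P : X → FiniteMeasure X) : Prop :=
  ∀ r : ℝ, 0 < r → ∃ m : ℕ, 1 ≤ m ∧ ∃ p : ℝ, 0 < p ∧
    ∀ u v : X, ENNReal.ofReal p ≤ kIter P m u (Metric.closedBall v r)

/-- Uniform Feller property of a generalised Markov kernel with respect to a class `C`. -/
def UnifFeller (P : X → FiniteMeasure X) (C : Set (X → ℝ)) : Prop :=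
  ∀ f ∈ C, UniformEquicontinuous fun (k : ℕ) (u : X) =>
    (supN (opIter P k f))⁻¹ * opIter P k f u


lemma aux_meas_coe (P : X → FiniteMeasure X) (hFeller : Continuous P) :
    Measurable (fun v => (P v : Measure X)) := by
  have hcl : ∀ F : Set X, IsClosed F → Measurable (fun v => (P v : Measure X) F) := by
    intro F hF
    refine measurable_of_tendsto_metrizable
      (f := fun (n : ℕ) v => ∫⁻ x, hF.apprSeq n x ∂(P v : Measure X)) (fun n => ?_) ?_
    · exact ((FiniteMeasure.continuous_iff_forall_continuous_lintegral).1 hFeller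
        (hF.apprSeq n)).measurable
    · rw [tendsto_pi_nhds]
      intro v
      exact HasOuterApproxClosed.tendsto_lintegral_apprSeq hF (P v : Measure X)
  refine Measurable.measure_of_isPiSystem (S := {s | IsClosed s}) ?_ isPiSystem_isClosed
    (fun s hs => hcl s hs) (hcl _ isClosed_univ)
  rw [BorelSpace.measurable_eq (α := X), borel_eq_generateFrom_isClosed]

lemma aux_meas_kIter (P : X → FiniteMeasure X) (hP : Measurable (fun v => (P v : Measure X)))
    (m : ℕ) : Measurable (kIter P m) := by
  induction m with
  | zero => exact Measure.measurable_dirac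
  | succ k ih => exact (Measure.measurable_bind' hP).comp ih

lemma aux_bind_kIter (P : X → FiniteMeasure X) (hP : Measurable (fun v => (P v : Measure X)))
    (μ : Measure X) (c : ℝ≥0∞) (h : μ.bind (fun v => (P v : Measure X)) = c • μ) (m : ℕ) :
    μ.bind (kIter P m) = c ^ m • μ := by
  induction m with
  | zero => simpa [kIter] using (Measure.bind_dirac (m := μ))
  | succ k ih =>
    have := Measure.bind_bind (m := μ) (aux_meas_kIter P hP k).aemeasurable
      (g := fun v => (P v : Measure X)) hP.aemeasurable
    change μ.bind (fun u => (kIter P k u).bind fun v => (P v : Measure X)) = _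
    rw [← this, ih, Measure.bind_smul, h, smul_smul, pow_succ]

/-- **Full support of eigen-measures** (Step 2 of the proof of Theorem 3.1): if the kernel is
uniformly irreducible and `𝔓*μ = λμ` with `μ ∈ 𝒫(X)`, `λ > 0`, then
`μ(B(û,r)) ≥ λ^{-m} p > 0` for the constants `m, p` of uniform irreducibility, and hence
`supp μ = X`. -/
theorem statement9 (P : X → FiniteMeasure X)
    (hFeller : Continuous P) (hnz : ∀ u, P u ≠ 0)
    (hUI : UnifIrred P)
    (μ : ProbabilityMeasure X) (lam : ℝ) (hlam : 0 < lam)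
    (heig : (μ : Measure X).bind (fun v => (P v : Measure X))
        = ENNReal.ofReal lam • (μ : Measure X)) :
    (∀ r : ℝ, 0 < r → ∀ m : ℕ, ∀ p : ℝ, 1 ≤ m → 0 < p →
      (∀ u v : X, ENNReal.ofReal p ≤ kIter P m u (Metric.closedBall v r)) →
      ∀ v : X,
        0 < (ENNReal.ofReal lam ^ m)⁻¹ * ENNReal.ofReal p ∧
        (ENNReal.ofReal lam ^ m)⁻¹ * ENNReal.ofReal p
            ≤ (μ : Measure X) (Metric.closedBall v r)) ∧
    ∀ U : Set X, IsOpen U → U.Nonempty → 0 < (μ : Measure X) U := by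
  have hP := aux_meas_coe P hFeller
  have main : ∀ r : ℝ, 0 < r → ∀ m : ℕ, ∀ p : ℝ, 1 ≤ m → 0 < p →
      (∀ u v : X, ENNReal.ofReal p ≤ kIter P m u (Metric.closedBall v r)) →
      ∀ v : X,
        0 < (ENNReal.ofReal lam ^ m)⁻¹ * ENNReal.ofReal p ∧
        (ENNReal.ofReal lam ^ m)⁻¹ * ENNReal.ofReal p
            ≤ (μ : Measure X) (Metric.closedBall v r) := by
    intro r hr m p hm hp hb v
    have hl0 : ENNReal.ofReal lam ^ m ≠ 0 := pow_ne_zero _ (by simpa using hlam)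
    have hlt : ENNReal.ofReal lam ^ m ≠ ∞ := ENNReal.pow_ne_top ENNReal.ofReal_ne_top
    refine ⟨ENNReal.mul_pos (ENNReal.inv_ne_zero.2 hlt) (by simpa using hp), ?_⟩
    have h1 : ENNReal.ofReal p ≤ ENNReal.ofReal lam ^ m *
        (μ : Measure X) (Metric.closedBall v r) := by
      have h2 := congrArg (fun ν : Measure X => ν (Metric.closedBall v r))
        (aux_bind_kIter P hP μ _ heig m)
      simp only [Measure.smul_apply, smul_eq_mul] at h2
      rw [← h2, Measure.bind_apply Metric.isClosed_closedBall.measurableSet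
        (aux_meas_kIter P hP m).aemeasurable]
      calc ENNReal.ofReal p = ∫⁻ _, ENNReal.ofReal p ∂(μ : Measure X) := by simp
        _ ≤ _ := lintegral_mono (fun u => hb u v)
    calc _ ≤ (ENNReal.ofReal lam ^ m)⁻¹ * (ENNReal.ofReal lam ^ m *
        (μ : Measure X) (Metric.closedBall v r)) := by gcongr
      _ = _ := by rw [← mul_assoc, ENNReal.inv_mul_cancel hl0 hlt, one_mul]
  refine ⟨main, ?_⟩
  rintro U hU ⟨x, hx⟩
  obtain ⟨r, hr, hsub⟩ := Metric.nhds_basis_closedBall.mem_iff.1 (hU.mem_nhds hx)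
  obtain ⟨m, hm, p, hp, hb⟩ := hUI r hr
  obtain ⟨h1, h2⟩ := main r hr m p hm hp hb x
  exact (h1.trans_le h2).trans_le (measure_mono hsub)
end
end

section
/- Let P(u,Γ) be a generalised Markov kernel on a compact metric space X satisfying the uniform Feller property (with determining family 𝒞 ⊆ C₊(X) of non-zero functions containing 𝟏) and the uniform irreducibility property, and suppose μ ∈ 𝒫(X) satisfies 𝔓*μ = μ. Then for every f ∈ 𝒞 there is a constant C_f > 1 such that C_f^{-1} ≤ ‖𝔓_k f‖_∞ ≤ C_f for all k ≥ 1. -/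
open MeasureTheory Filter Topology
open scoped ENNReal NNReal

noncomputable section

variable {X : Type} [MetricSpace X] [CompactSpace X] [MeasurableSpace X] [BorelSpace X]

lemma meas_P (P : X → FiniteMeasure X) (hP : Continuous P) :
    Measurable fun v => (P v : Measure X) := by
  apply Measurable.measure_of_isPiSystem (S := {s : Set X | IsClosed s})
    (BorelSpace.measurable_eq.trans borel_eq_generateFrom_isClosed) isPiSystem_isClosed
  · intro s hs
    have hs : IsClosed s := hs
    refine measurable_of_tendsto_metrizable (f := fun (n : ℕ) v => ∫⁻ x, hs.apprSeq n x ∂(P v : Measure X))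
      ?_ ?_
    · intro n
      apply Continuous.measurable
      have h := (FiniteMeasure.continuous_testAgainstNN_eval (hs.apprSeq n)).comp hP
      have h2 := ENNReal.continuous_coe.comp h
      convert h2 using 2 with v
      simp [FiniteMeasure.testAgainstNN_coe_eq]
    · rw [tendsto_pi_nhds]
      intro v
      exact HasOuterApproxClosed.tendsto_lintegral_apprSeq hs _
  · have h2 := ENNReal.continuous_coe.comp (FiniteMeasure.continuous_mass.comp hP)
    convert h2.measurable using 2 with v
    simp [FiniteMeasure.ennreal_mass]

lemma meas_kIter (P : X → FiniteMeasure X) (hP : Continuous P) (k : ℕ) :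
    Measurable (kIter P k) := by
  induction k with
  | zero => exact Measure.measurable_dirac
  | succ k ih => exact (Measure.measurable_bind' (meas_P P hP)).comp ih

lemma bind_kIter (P : X → FiniteMeasure X) (hP : Continuous P) (μ : Measure X)
    (hstat : μ.bind (fun v => (P v : Measure X)) = μ) (k : ℕ) :
    μ.bind (kIter P k) = μ := by
  induction k with
  | zero => exact Measure.bind_dirac
  | succ k ih =>
    have := Measure.bind_bind (m := μ) (meas_kIter P hP k).aemeasurable
      (meas_P P hP).aemeasurable
    rw [ih, hstat] at this
    exact this.symm

lemma cont_opP (P : X → FiniteMeasure X) (hP : Continuous P) {f : X → ℝ} (hf : Continuous f) :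
    Continuous (opP P f) := by
  rw [continuous_iff_continuousAt]
  intro u
  have := (FiniteMeasure.tendsto_iff_forall_integral_tendsto.1 (hP.tendsto u))
    (BoundedContinuousFunction.mkOfCompact ⟨f, hf⟩)
  exact this

lemma int_opP (P : X → FiniteMeasure X) (hP : Continuous P) (μ : Measure X) 
    (hstat : μ.bind (fun v => (P v : Measure X)) = μ) {f : X → ℝ} (hf : Continuous f)
    (hf0 : ∀ x, 0 ≤ f x) : ∫ x, opP P f x ∂μ = ∫ x, f x ∂μ := by
  have h0 : ∀ x, 0 ≤ opP P f x := fun x => integral_nonneg hf0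
  rw [integral_eq_lintegral_of_nonneg_ae (.of_forall h0)
    (cont_opP P hP hf).measurable.aestronglyMeasurable,
    integral_eq_lintegral_of_nonneg_ae (.of_forall hf0) hf.measurable.aestronglyMeasurable]
  congr 1
  conv_rhs => rw [← hstat]
  rw [Measure.lintegral_bind (meas_P P hP).aemeasurable
    hf.measurable.ennreal_ofReal.aemeasurable]
  apply lintegral_congr
  intro x
  rw [opP, ofReal_integral_eq_lintegral_ofReal _ (.of_forall hf0)]
  exact hf.integrable_of_hasCompactSupport (HasCompactSupport.of_compactSpace f)

lemma opIter_props (P : X → FiniteMeasure X) (hP : Continuous P) (μ : Measure X) 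
    (hstat : μ.bind (fun v => (P v : Measure X)) = μ) {f : X → ℝ} (hf : Continuous f)
    (hf0 : ∀ x, 0 ≤ f x) (k : ℕ) : Continuous (opIter P k f) ∧ (∀ x, 0 ≤ opIter P k f x) ∧
      ∫ x, opIter P k f x ∂μ = ∫ x, f x ∂μ := by
  induction k with
  | zero => exact ⟨hf, hf0, rfl⟩
  | succ k ih =>
    obtain ⟨h1, h2, h3⟩ := ih
    exact ⟨cont_opP P hP h1, fun x => integral_nonneg h2, (int_opP P hP μ hstat h1 h2).trans h3⟩

/-- **Two-sided bounds on `‖𝔓_k f‖`** (Step 2 of the proof of Theorem 3.1): under the uniform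
Feller and uniform irreducibility properties, if `𝔓*μ = μ` for some `μ ∈ 𝒫(X)`, then for every
`f` in the determining class there is `C_f > 1` with `C_f⁻¹ ≤ ‖𝔓_k f‖_∞ ≤ C_f` for all
`k ≥ 1`. -/
theorem statement10 (P : X → FiniteMeasure X)
    (hFeller : Continuous P) (hnz : ∀ u, P u ≠ 0)
    (C : Set (X → ℝ))
    (hCpos : ∀ f ∈ C, Continuous f ∧ ∀ x, 0 < f x)
    (hone : (fun _ : X => (1 : ℝ)) ∈ C)
    (hdet : Determining C)
    (hUF : UnifFeller P C)
    (hUI : UnifIrred P)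
    (μ : ProbabilityMeasure X)
    (hstat : (μ : Measure X).bind (fun v => (P v : Measure X)) = (μ : Measure X)) :
    ∀ f ∈ C, ∃ Cf : ℝ, 1 < Cf ∧
      ∀ k : ℕ, 1 ≤ k → Cf⁻¹ ≤ supN (opIter P k f) ∧ supN (opIter P k f) ≤ Cf := by
  intro f hfC
  obtain ⟨hfc, hfpos⟩ := hCpos f hfC
  have hint : ∀ g : X → ℝ, Continuous g → Integrable g (μ : Measure X) := fun g hg =>
    hg.integrable_of_hasCompactSupport (HasCompactSupport.of_compactSpace g)
  have hc : 0 < ∫ x, f x ∂(μ : Measure X) := by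
    rw [integral_pos_iff_support_of_nonneg (fun x => (hfpos x).le) (hint f hfc)]
    have : Function.support f = Set.univ := by
      ext x; simp [(hfpos x).ne']
    rw [this]; simp
  set c := ∫ x, f x ∂(μ : Measure X) with hcdef
  have hprop := opIter_props P hFeller (μ : Measure X) hstat hfc (fun x => (hfpos x).le)
  have hbdd : ∀ k, BddAbove (Set.range fun x => |opIter P k f x|) := fun k =>
    (isCompact_range ((hprop k).1.abs)).bddAbove
  have hle : ∀ k x, opIter P k f x ≤ supN (opIter P k f) := fun k x =>
    (le_abs_self _).trans (le_ciSup (hbdd k) x)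
  have hlow : ∀ k, c ≤ supN (opIter P k f) := by
    intro k
    have := integral_mono (hint _ (hprop k).1) (integrable_const (supN (opIter P k f)))
      (hle k) (μ := (μ : Measure X))
    rw [(hprop k).2.2] at this
    simpa using this
  obtain ⟨δ, hδ, hδ'⟩ := Metric.uniformEquicontinuous_iff.1 (hUF f hfC) (1/2) (by norm_num)
  obtain ⟨m, -, p, hp, hirr⟩ := hUI (δ/2) (by positivity)
  have hball : ∀ v, p ≤ (μ : Measure X).real (Metric.closedBall v (δ/2)) := by
    intro v
    have : ENNReal.ofReal p ≤ (μ : Measure X) (Metric.closedBall v (δ/2)) := by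
      rw [← bind_kIter P hFeller (μ : Measure X) hstat m,
        Measure.bind_apply Metric.isClosed_closedBall.measurableSet
          (meas_kIter P hFeller m).aemeasurable]
      calc ENNReal.ofReal p = ∫⁻ _, ENNReal.ofReal p ∂(μ : Measure X) := by simp
        _ ≤ _ := lintegral_mono fun u => hirr u v
    exact (ENNReal.ofReal_le_iff_le_toReal (measure_ne_top _ _)).1 this
  have hup : ∀ k, supN (opIter P k f) ≤ 2 * c / p := by
    intro k
    set N := supN (opIter P k f) with hN
    have hNpos : 0 < N := hc.trans_le (hlow k)
    have hne : Nonempty X := μ.nonempty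
    obtain ⟨u, hu⟩ : ∃ u, opIter P k f u = N := by
      obtain ⟨u, -, hu⟩ := isCompact_univ.exists_isMaxOn Set.univ_nonempty
        ((hprop k).1.continuousOn)
      refine ⟨u, le_antisymm (hle k u) (ciSup_le fun x => ?_)⟩
      rw [abs_of_nonneg ((hprop k).2.1 x)]
      exact hu (Set.mem_univ x)
    have hB : ∀ x ∈ Metric.closedBall u (δ/2), N / 2 ≤ opIter P k f x := by
      intro x hx
      have h := hδ' x u (by rw [Metric.mem_closedBall] at hx; linarith) k
      rw [← hN, hu, Real.dist_eq, inv_mul_cancel₀ hNpos.ne', abs_lt] at h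
      have h1 : 1/2 < N⁻¹ * opIter P k f x := by linarith [h.1]
      rw [inv_mul_eq_div, lt_div_iff₀ hNpos] at h1
      linarith
    have hmain : N / 2 * p ≤ c := by
      calc N / 2 * p ≤ N / 2 * (μ : Measure X).real (Metric.closedBall u (δ/2)) := by
            gcongr; exact hball u
        _ = ∫ x in Metric.closedBall u (δ/2), N / 2 ∂(μ : Measure X) := by
            simp [mul_comm]
        _ ≤ ∫ x in Metric.closedBall u (δ/2), opIter P k f x ∂(μ : Measure X) :=
            setIntegral_mono_on (integrable_const _).integrableOn (hint _ (hprop k).1).integrableOn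
              Metric.isClosed_closedBall.measurableSet hB
        _ ≤ ∫ x, opIter P k f x ∂(μ : Measure X) :=
            setIntegral_le_integral (hint _ (hprop k).1) (.of_forall (hprop k).2.1)
        _ = c := (hprop k).2.2
    rw [le_div_iff₀ hp]; linarith
  refine ⟨max 2 (max c⁻¹ (2 * c / p)), lt_max_of_lt_left (by norm_num), fun k _ => ⟨?_, ?_⟩⟩
  · refine (inv_le_of_inv_le₀ hc ?_).trans (hlow k)
    exact (le_max_left _ _).trans (le_max_right _ _)
  · exact (hup k).trans ((le_max_right _ _).trans (le_max_right _ _))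
end
end

section
/- Let P(u,Γ) be a generalised Markov kernel on a compact metric space X satisfying the uniform Feller and uniform irreducibility properties, and let (λ, μ, h) ∈ ℝ₊ × 𝒫(X) × C₊(X) be the triple given by the corresponding eigenvalue theorem: 𝔓h = λh, 𝔓*μ = λμ, ⟨h,μ⟩ = 1, with μ and h unique and λ^{-k}𝔓*_k ν ⇀ ⟨h,ν⟩μ for every finite non-negative measure ν. Define the Markov semigroup 𝒮_k g = λ^{-k} h^{-1} 𝔓_k(gh) on C(X). Then the measure ν = h μ (i.e. ν(dx) = h(x) μ(dx)) belongs to 𝒫(X) and is the unique stationary measure of {𝒮_k}, i.e. the unique ν' ∈ 𝒫(X) with ⟨𝒮₁ g, ν'⟩ = ⟨g, ν'⟩ for all g ∈ C(X). -/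
open MeasureTheory Filter Topology
open scoped ENNReal NNReal

noncomputable section

variable {X : Type} [MetricSpace X] [CompactSpace X] [MeasurableSpace X] [BorelSpace X]

theorem aux_meas (P : X → FiniteMeasure X) (hP : Continuous P) :
    Measurable (fun v => (P v : Measure X)) := by
  have key : ∀ f : BoundedContinuousFunction X ℝ≥0,
      Measurable fun a => ∫⁻ x, (f x : ℝ≥0∞) ∂(P a : Measure X) := by
    intro f
    have h1 : Continuous fun a => (P a).testAgainstNN f :=
      (FiniteMeasure.continuous_testAgainstNN_eval f).comp hP
    have h2 : (fun a => ∫⁻ x, (f x : ℝ≥0∞) ∂(P a : Measure X))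
        = fun a => ((P a).testAgainstNN f : ℝ≥0∞) := by
      funext a
      exact (FiniteMeasure.testAgainstNN_coe_eq).symm
    rw [h2]
    exact (ENNReal.continuous_coe.comp h1).measurable
  have hcl : ∀ s : Set X, IsClosed s → Measurable fun a => (P a : Measure X) s := by
    intro s hs
    refine measurable_of_tendsto_metrizable (f := fun n a => ∫⁻ x, (hs.apprSeq n x : ℝ≥0∞)
      ∂(P a : Measure X)) (fun n => key _) ?_
    rw [tendsto_pi_nhds]
    intro a
    exact HasOuterApproxClosed.tendsto_lintegral_apprSeq hs _
  refine Measurable.measure_of_isPiSystem (S := {s | IsClosed s}) ?_ isPiSystem_isClosed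
    (fun s hs => hcl s hs) (hcl _ isClosed_univ)
  rw [← borel_eq_generateFrom_isClosed]
  exact BorelSpace.measurable_eq

theorem aux_int (m : Measure X) [IsFiniteMeasure m] (f : X → ℝ) (hf : Continuous f) :
    Integrable f m :=
  hf.integrable_of_hasCompactSupport (HasCompactSupport.of_compactSpace f)

theorem aux_fin (P : X → FiniteMeasure X) (hP : Continuous P) (m : Measure X)
    [IsFiniteMeasure m] : IsFiniteMeasure (m.bind fun v => (P v : Measure X)) := by
  have hc : Continuous fun a => (P a).mass := FiniteMeasure.continuous_mass.comp hP
  obtain ⟨c, hc'⟩ := (isCompact_range hc).bddAbove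
  refine ⟨?_⟩
  rw [Measure.bind_apply MeasurableSet.univ (aux_meas P hP).aemeasurable]
  calc ∫⁻ a, (P a : Measure X) Set.univ ∂m ≤ ∫⁻ _, (c : ℝ≥0∞) ∂m := by
        refine lintegral_mono fun a => ?_
        rw [← FiniteMeasure.ennreal_mass]
        exact ENNReal.coe_le_coe.2 (hc' ⟨a, rfl⟩)
    _ < ⊤ := by
        rw [lintegral_const]
        exact ENNReal.mul_lt_top ENNReal.coe_lt_top (measure_lt_top _ _)

theorem aux_bind (P : X → FiniteMeasure X) (hP : Continuous P) (m : Measure X)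
    [IsFiniteMeasure m] (f : X → ℝ) (hf : Continuous f) :
    ∫ x, f x ∂(m.bind fun v => (P v : Measure X)) = ∫ u, opP P f u ∂m := by
  have hfi := aux_fin P hP m
  let κ : ProbabilityTheory.Kernel X X := ⟨fun v => (P v : Measure X), aux_meas P hP⟩
  have e : (κ.comp (ProbabilityTheory.Kernel.const Unit m)) () = m.bind κ := by
    rw [ProbabilityTheory.Kernel.comp_apply, ProbabilityTheory.Kernel.const_apply]
  have hi : Integrable f ((κ.comp (ProbabilityTheory.Kernel.const Unit m)) ()) := by
    rw [e]
    exact @aux_int X _ _ _ _ (m.bind κ) hfi f hf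
  have := ProbabilityTheory.Kernel.integral_comp hi
  rw [e, ProbabilityTheory.Kernel.const_apply] at this
  exact this

theorem aux_wd (m : Measure X) (h : X → ℝ) (hc : Continuous h) (hp : ∀ x, 0 < h x)
    (g : X → ℝ) :
    ∫ x, g x ∂(m.withDensity fun x => ENNReal.ofReal (h x)) = ∫ x, h x * g x ∂m := by
  rw [integral_withDensity_eq_integral_toReal_smul hc.measurable.ennreal_ofReal
    (Eventually.of_forall fun x => ENNReal.ofReal_lt_top)]
  refine integral_congr_ae (Eventually.of_forall fun x => ?_)
  simp [ENNReal.toReal_ofReal (hp x).le]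

theorem aux_wdfin (m : Measure X) [IsFiniteMeasure m] (h : X → ℝ) (hc : Continuous h) :
    IsFiniteMeasure (m.withDensity fun x => ENNReal.ofReal (h x)) :=
  isFiniteMeasure_withDensity_ofReal (aux_int m h hc).2

theorem aux_ext (m n : Measure X) [IsFiniteMeasure m] [IsFiniteMeasure n]
    (hh : ∀ f : X → ℝ, Continuous f → ∫ x, f x ∂m = ∫ x, f x ∂n) : m = n :=
  ext_of_forall_integral_eq_of_IsFiniteMeasure fun f => hh f f.continuous

/-- **Lemma 4.2 (uniqueness of the stationary measure of `𝒮^V`)**: given the eigen-triple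
`(λ, μ, h)` of Theorem 3.1, the measure `ν = h μ` is the unique stationary measure of the
Markov semigroup `𝒮_k g = λ^{-k} h^{-1} 𝔓_k (g h)`. -/
theorem statement12 (P : X → FiniteMeasure X)
    (hFeller : Continuous P) (hnz : ∀ u, P u ≠ 0)
    (C : Set (X → ℝ))
    (hCpos : ∀ f ∈ C, Continuous f ∧ ∀ x, 0 < f x)
    (hone : (fun _ : X => (1 : ℝ)) ∈ C)
    (hdet : Determining C)
    (hUF : UnifFeller P C)
    (hUI : UnifIrred P)
    (lam : ℝ) (hlam : 0 < lam) (μ : ProbabilityMeasure X) (h : X → ℝ)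
    (hcont : Continuous h) (hpos : ∀ x, 0 < h x)
    (hnorm : (∫ x, h x ∂(μ : Measure X)) = 1)
    (heigh : ∀ u, opP P h u = lam * h u)
    (heigμ : (μ : Measure X).bind (fun v => (P v : Measure X))
        = ENNReal.ofReal lam • (μ : Measure X))
    (hconv : ∀ ν : Measure X, IsFiniteMeasure ν → ∀ g : X → ℝ, Continuous g →
      Tendsto (fun k : ℕ => (lam ^ k)⁻¹ * ∫ x, g x ∂(dualIter P k ν)) atTop
        (𝓝 ((∫ x, h x ∂ν) * ∫ x, g x ∂(μ : Measure X)))) :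
    IsProbabilityMeasure
        ((μ : Measure X).withDensity fun x => ENNReal.ofReal (h x)) ∧
    (∀ g : X → ℝ, Continuous g →
      (∫ u, lam⁻¹ * (h u)⁻¹ * opP P (fun x => g x * h x) u
          ∂((μ : Measure X).withDensity fun x => ENNReal.ofReal (h x)))
        = ∫ u, g u ∂((μ : Measure X).withDensity fun x => ENNReal.ofReal (h x))) ∧
    ∀ ν' : ProbabilityMeasure X,
      (∀ g : X → ℝ, Continuous g →
        (∫ u, lam⁻¹ * (h u)⁻¹ * opP P (fun x => g x * h x) u ∂(ν' : Measure X))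
          = ∫ u, g u ∂(ν' : Measure X)) →
      (ν' : Measure X) = (μ : Measure X).withDensity fun x => ENNReal.ofReal (h x) := by
  classical
  refine ⟨⟨?_⟩, ?_, ?_⟩
  · rw [withDensity_apply _ MeasurableSet.univ, Measure.restrict_univ,
      ← ofReal_integral_eq_lintegral_ofReal (aux_int _ h hcont)
        (Eventually.of_forall fun x => (hpos x).le), hnorm, ENNReal.ofReal_one]
  · intro g hg
    rw [aux_wd _ h hcont hpos, aux_wd _ h hcont hpos]
    have h1 := aux_bind P hFeller (μ : Measure X) (fun x => g x * h x) (hg.mul hcont)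
    rw [heigμ, integral_smul_measure, ENNReal.toReal_ofReal hlam.le] at h1
    have h2 : ∀ u, h u * (lam⁻¹ * (h u)⁻¹ * opP P (fun x => g x * h x) u)
        = lam⁻¹ * opP P (fun x => g x * h x) u := by
      intro u
      have := (hpos u).ne'
      field_simp
    simp_rw [h2]
    rw [integral_const_mul, ← h1, smul_eq_mul, inv_mul_cancel_left₀ hlam.ne']
    simp_rw [mul_comm]
  · intro ν' hν
    have hic : Continuous fun x => (h x)⁻¹ := hcont.inv₀ fun x => (hpos x).ne'
    have hip : ∀ x, 0 < (h x)⁻¹ := fun x => inv_pos.2 (hpos x)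
    let σ : Measure X := (ν' : Measure X).withDensity fun x => ENNReal.ofReal ((h x)⁻¹)
    have hσ : σ = (ν' : Measure X).withDensity fun x => ENNReal.ofReal ((h x)⁻¹) := rfl
    have : IsFiniteMeasure σ := aux_wdfin _ _ hic
    have := aux_fin P hFeller σ
    have hb : σ.bind (fun v => (P v : Measure X)) = ENNReal.ofReal lam • σ := by
      have : IsFiniteMeasure (ENNReal.ofReal lam • σ) :=
        Measure.smul_finite σ ENNReal.ofReal_ne_top
      refine aux_ext _ _ fun f hf => ?_
      rw [aux_bind P hFeller σ f hf, integral_smul_measure, ENNReal.toReal_ofReal hlam.le, hσ,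
        aux_wd _ _ hic hip, aux_wd _ _ hic hip]
      have h1 := hν (fun x => (h x)⁻¹ * f x) (hic.mul hf)
      have h2 : (fun x => (h x)⁻¹ * f x * h x) = f := by
        funext x
        have := (hpos x).ne'
        field_simp
      rw [h2] at h1
      simp_rw [mul_assoc] at h1
      rw [integral_const_mul] at h1
      rw [smul_eq_mul, ← h1, mul_inv_cancel_left₀ hlam.ne']
    have hk : ∀ k, dualIter P k σ = ENNReal.ofReal (lam ^ k) • σ := by
      intro k
      induction k with
      | zero => simp [dualIter]
      | succ k ih =>
        have e : dualIter P (k + 1) σ = (dualIter P k σ).bind fun v => (P v : Measure X) := rfl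
        have hm := aux_meas P hFeller
        have e2 : (ENNReal.ofReal (lam ^ k) • σ).bind (fun v => (P v : Measure X))
            = ENNReal.ofReal (lam ^ k) • σ.bind (fun v => (P v : Measure X)) := by
          ext s hs
          rw [Measure.bind_apply hs hm.aemeasurable, lintegral_smul_measure,
            Measure.smul_apply, Measure.bind_apply hs hm.aemeasurable]
        rw [e, ih, e2, hb, smul_smul, ← ENNReal.ofReal_mul (pow_nonneg hlam.le k), pow_succ]
    have hσh : ∫ x, h x ∂σ = 1 := by
      rw [hσ, aux_wd _ _ hic hip]
      have : ∀ x, (h x)⁻¹ * h x = 1 := fun x => inv_mul_cancel₀ (hpos x).ne'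
      simp [this]
    have hσμ : σ = (μ : Measure X) := by
      refine aux_ext _ _ fun g hg => ?_
      have h1 := hconv σ inferInstance g hg
      rw [hσh, one_mul] at h1
      refine tendsto_nhds_unique (tendsto_const_nhds.congr fun k => ?_) h1
      have hl := pow_pos hlam k
      rw [hk, integral_smul_measure, ENNReal.toReal_ofReal hl.le, smul_eq_mul,
        inv_mul_cancel_left₀ hl.ne']
    rw [← hσμ]
    have := aux_wdfin σ h hcont
    refine aux_ext _ _ fun g _ => ?_
    rw [aux_wd _ _ hcont hpos, hσ, aux_wd _ _ hic hip]
    refine integral_congr_ae (Eventually.of_forall fun x => ?_)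
    exact (inv_mul_cancel_left₀ (hpos x).ne' _).symm
end
end

section
/- (Uniform Dawson–Gärtner theorem.) Let X be a Polish space, 𝐗 = X^{ℤ₊} with the Tikhonov topology, p_m : 𝐗 → X^m the projection onto the first m components, Y an arbitrary set, {𝜻_k(y), y ∈ Y} a family of sequences of random probability measures on 𝐗, and ζ_k^m(y) the image of 𝜻_k(y) under p_m. Suppose that for every integer m ≥ 1 the family {ζ_k^m(y), y ∈ Y} satisfies the uniform large deviation principle with a good rate function I_m : 𝒫(X^m) → [0,+∞]. Then the family {𝜻_k(y), y ∈ Y} satisfies the uniform large deviation principle with the good rate function 𝐈(σ) = sup_{m≥1} I_m(σ ∘ p_m^{-1}). -/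
open MeasureTheory Filter Topology
open scoped ENNReal NNReal

noncomputable section

/-- Pushforward of a probability measure on the path space `ℕ → X` under the projection to the
first `m` coordinates. -/
def projPM {X : Type*} [MeasurableSpace X] (m : ℕ) (σ : ProbabilityMeasure (ℕ → X)) :
    ProbabilityMeasure (Fin m → X) :=
  σ.map (f := fun (x : ℕ → X) (i : Fin m) => x i)
    (Measurable.aemeasurable (measurable_pi_lambda (fun (x : ℕ → X) (i : Fin m) => x i)
      (fun i => measurable_pi_apply (i : ℕ))))

/-- Uniform large deviation principle for a family of random probability measures indexed by a
parameter set `Y`: for every Borel `Γ`,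
`-I(int Γ) ≤ liminf k⁻¹ log inf_y ℙ{ζ_k(y) ∈ Γ}` and
`limsup k⁻¹ log sup_y ℙ{ζ_k(y) ∈ Γ} ≤ -I(cl Γ)`. -/
def UnifLDPof {Z : Type*} [TopologicalSpace Z]
    (probInf probSup : ℕ → Set Z → ℝ≥0∞) (I : Z → ℝ≥0∞) : Prop :=
  ∀ Γ : Set Z,
    (-(⨅ σ ∈ interior Γ, (I σ : EReal))
        ≤ Filter.liminf
            (fun k : ℕ => (((k : ℝ)⁻¹ : ℝ) : EReal) * ENNReal.log (probInf k Γ)) atTop) ∧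
    (Filter.limsup
        (fun k : ℕ => (((k : ℝ)⁻¹ : ℝ) : EReal) * ENNReal.log (probSup k Γ)) atTop
      ≤ -(⨅ σ ∈ closure Γ, (I σ : EReal)))

theorem projPM_continuous {X : Type} [TopologicalSpace X] [SecondCountableTopology X]
    [MeasurableSpace X] [BorelSpace X] (m : ℕ) :
    Continuous (projPM (X := X) m) :=
  ProbabilityMeasure.continuous_map
    (f := fun (x : ℕ → X) (i : Fin m) => x i) (by fun_prop)

/-- projection from `m` to `j` coordinates -/
def projFin {X : Type} [MeasurableSpace X] {j m : ℕ} (h : j ≤ m)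
    (σ : ProbabilityMeasure (Fin m → X)) : ProbabilityMeasure (Fin j → X) :=
  σ.map (f := fun (x : Fin m → X) (i : Fin j) => x (Fin.castLE h i))
    (Measurable.aemeasurable (by fun_prop))

theorem projFin_continuous {X : Type} [TopologicalSpace X] [SecondCountableTopology X]
    [MeasurableSpace X] [BorelSpace X] {j m : ℕ} (h : j ≤ m) :
    Continuous (projFin (X := X) h) :=
  ProbabilityMeasure.continuous_map
    (f := fun (x : Fin m → X) (i : Fin j) => x (Fin.castLE h i)) (by fun_prop)

theorem projFin_projPM {X : Type} [MeasurableSpace X] {j m : ℕ} (h : j ≤ m)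
    (σ : ProbabilityMeasure (ℕ → X)) : projFin h (projPM m σ) = projPM j σ := by
  apply Subtype.ext
  change Measure.map _ (Measure.map _ (σ : Measure (ℕ → X))) = Measure.map _ _
  rw [Measure.map_map (by fun_prop) (by fun_prop)]
  rfl

/-- extension by a constant -/
def extFun {X : Type} (x0 : X) (m : ℕ) (u : Fin m → X) : ℕ → X :=
  fun i => if h : i < m then u ⟨i, h⟩ else x0

theorem extFun_continuous {X : Type} [TopologicalSpace X] (x0 : X) (m : ℕ) :
    Continuous (extFun x0 m) := by
  refine continuous_pi fun i => ?_
  unfold extFun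
  split_ifs <;> fun_prop

theorem extFun_measurable {X : Type} [MeasurableSpace X] (x0 : X) (m : ℕ) :
    Measurable (extFun x0 m) := by
  refine measurable_pi_lambda _ fun i => ?_
  unfold extFun
  split_ifs <;> fun_prop

theorem exists_ext {X : Type} [MeasurableSpace X] (x0 : X) (m : ℕ)
    (τ : ProbabilityMeasure (Fin m → X)) :
    ∃ σ : ProbabilityMeasure (ℕ → X), projPM m σ = τ := by
  refine ⟨τ.map (extFun_measurable x0 m).aemeasurable, ?_⟩
  apply Subtype.ext
  change Measure.map _ (Measure.map _ (τ : Measure (Fin m → X))) = (τ : Measure (Fin m → X))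
  rw [Measure.map_map (by fun_prop) (extFun_measurable x0 m)]
  convert Measure.map_id
  ext u i
  simp [extFun]

theorem unif_cyl {X : Type} [MetricSpace X] (f : (ℕ → X) → ℝ) (hf : UniformContinuous f)
    (ε : ℝ) (hε : 0 < ε) :
    ∃ m : ℕ, ∀ x y : ℕ → X, (∀ i < m, x i = y i) → dist (f x) (f y) < ε := by
  have h1 : {p : (ℕ → X) × (ℕ → X) | dist (f p.1) (f p.2) < ε} ∈ uniformity (ℕ → X) :=
    hf (Metric.dist_mem_uniformity hε)
  rw [Pi.uniformity, mem_iInf] at h1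
  obtain ⟨I, hI, V, hV, hEq⟩ := h1
  obtain ⟨m, hm⟩ := hI.bddAbove
  refine ⟨m + 1, fun x y hxy => ?_⟩
  change (x, y) ∈ {p : (ℕ → X) × (ℕ → X) | dist (f p.1) (f p.2) < ε}
  rw [hEq, Set.mem_iInter]
  intro i
  obtain ⟨W, hW, hWV⟩ := hV i
  apply hWV
  change (x i, y i) ∈ W
  rw [hxy i (Nat.lt_succ_of_le (hm i.2))]
  exact refl_mem_uniformity hW

theorem nhds_eq_proj {X : Type} [MetricSpace X] [SecondCountableTopology X]
    [MeasurableSpace X] [BorelSpace X] (σ : ProbabilityMeasure (ℕ → X)) :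
    𝓝 σ = ⨅ m : ℕ, comap (projPM (m + 1)) (𝓝 (projPM (m + 1) σ)) := by
  apply le_antisymm
  · exact le_iInf fun m => ((projPM_continuous (m+1)).tendsto σ).le_comap
  set l := ⨅ m : ℕ, comap (projPM (m + 1)) (𝓝 (projPM (m + 1) σ)) with hl
  have hcg : l.IsCountablyGenerated := by rw [hl]; infer_instance
  have ht : ∀ m : ℕ, Tendsto (projPM (m+1)) l (𝓝 (projPM (m+1) σ)) := fun m =>
    tendsto_iff_comap.2 (iInf_le _ m)
  clear_value l
  have x0 : X := by
    have : Nonempty (ℕ → X) := (σ : Measure (ℕ → X)).nonempty_of_neZero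
    exact this.some 0
  change Tendsto id l (𝓝 σ)
  let : MetricSpace (ℕ → X) := PiCountable.metricSpace
  rw [tendsto_iff_forall_lipschitz_integral_tendsto]
  rintro f ⟨C, hC⟩ ⟨L, hL⟩
  have hfu : UniformContinuous f := hL.uniformContinuous
  rw [Metric.tendsto_nhds]
  intro ε hε
  obtain ⟨m, hm⟩ := unif_cyl f hfu (ε/4) (by positivity)
  let g : BoundedContinuousFunction (Fin (m+1) → X) ℝ :=
    { toFun := fun u => f (extFun x0 (m+1) u)
      continuous_toFun := hL.continuous.comp (extFun_continuous x0 (m+1))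
      map_bounded' := ⟨C, fun x y => hC _ _⟩ }
  have hg := (ProbabilityMeasure.tendsto_iff_forall_integral_tendsto.1 (ht m)) g
  rw [Metric.tendsto_nhds] at hg
  let F : BoundedContinuousFunction (ℕ → X) ℝ :=
    { toFun := f
      continuous_toFun := hL.continuous
      map_bounded' := ⟨C, fun x y => hC _ _⟩ }
  have key : ∀ ν : ProbabilityMeasure (ℕ → X),
      dist (∫ ω, f ω ∂(ν : Measure (ℕ → X))) (∫ u, g u ∂(projPM (m+1) ν : Measure _)) ≤ ε/4 := by
    intro ν
    have h1 : ∫ u, g u ∂(projPM (m+1) ν : Measure _) =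
        ∫ ω : ℕ → X, g (fun i : Fin (m+1) => ω i) ∂(ν : Measure (ℕ → X)) := by
      change ∫ u, g u ∂(Measure.map _ (ν : Measure (ℕ → X))) = _
      rw [integral_map (Measurable.aemeasurable (by fun_prop)) g.continuous.aestronglyMeasurable]
    have i1 : Integrable f (ν : Measure (ℕ → X)) := F.integrable (μ := (ν : Measure (ℕ → X)))
    have i2 : Integrable (fun ω : ℕ → X => g (fun i : Fin (m+1) => ω i))
        (ν : Measure (ℕ → X)) :=
      (g.compContinuous ⟨fun (ω : ℕ → X) (i : Fin (m+1)) => ω i, by fun_prop⟩).integrable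
        (μ := (ν : Measure (ℕ → X)))
    rw [h1, dist_eq_norm, ← integral_sub i1 i2]
    refine (norm_integral_le_of_norm_le_const (C := ε/4) (.of_forall fun ω => ?_)).trans (by simp)
    rw [← dist_eq_norm]
    refine (hm _ _ fun i hi => ?_).le
    simp [extFun, show i < m + 1 by omega]
  filter_upwards [hg (ε/4) (by positivity)] with ν hν
  have k1 := key ν
  have k2 := key σ
  rw [dist_comm] at k2
  calc _ ≤ _ := dist_triangle4 _ _ _ _
    _ ≤ ε/4 + ε/4 + ε/4 := add_le_add (add_le_add k1 hν.le) k2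
    _ < ε := by linarith

theorem exists_cyl_nhds {X : Type} [MetricSpace X] [SecondCountableTopology X]
    [MeasurableSpace X] [BorelSpace X] (σ : ProbabilityMeasure (ℕ → X))
    (G : Set (ProbabilityMeasure (ℕ → X))) (hG : G ∈ 𝓝 σ) :
    ∃ m : ℕ, ∃ U : Set (ProbabilityMeasure (Fin (m+1) → X)), IsOpen U ∧ projPM (m+1) σ ∈ U ∧
      projPM (m+1) ⁻¹' U ⊆ G := by
  rw [nhds_eq_proj, mem_iInf_of_directed] at hG
  · obtain ⟨m, V, hV, hVG⟩ := hG
    obtain ⟨U, hUV, hU, hs⟩ := mem_nhds_iff.1 hV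
    exact ⟨m, U, hU, hs, (Set.preimage_mono hUV).trans hVG⟩
  · apply directed_of_isDirected_le
    intro a b hab
    have h : a + 1 ≤ b + 1 := by omega
    have : (projPM (X := X) (a+1)) = projFin h ∘ projPM (b+1) := by
      ext1 ν; exact (projFin_projPM h ν).symm
    rw [← projFin_projPM h σ, this, ← comap_comap]
    apply comap_mono
    exact ((projFin_continuous h).tendsto _).le_comap

theorem tight_of_compact {Z : Type} [TopologicalSpace Z] [PolishSpace Z] [MeasurableSpace Z]
    [BorelSpace Z] (K : Set (ProbabilityMeasure Z)) (hK : IsCompact K) (ε : ℝ≥0∞) (hε : 0 < ε) :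
    ∃ C : Set Z, IsCompact C ∧ ∀ μ ∈ K, (μ : Measure Z) Cᶜ ≤ ε := by
  let := TopologicalSpace.upgradeIsCompletelyMetrizable Z
  have := isTightMeasureSet_of_isCompact_closure (S := K) (by rwa [hK.isClosed.closure_eq])
  rw [isTightMeasureSet_iff_exists_isCompact_measure_compl_le] at this
  obtain ⟨C, hC, h⟩ := this ε hε
  exact ⟨C, hC, fun μ hμ => h _ ⟨μ, hμ, rfl⟩⟩

theorem compact_proj {X : Type} [MetricSpace X] [PolishSpace X]
    [MeasurableSpace X] [BorelSpace X]
    (K : (m : ℕ) → Set (ProbabilityMeasure (Fin m → X))) (hK : ∀ m, 1 ≤ m → IsCompact (K m)) :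
    IsCompact {σ : ProbabilityMeasure (ℕ → X) | ∀ m, 1 ≤ m → projPM m σ ∈ K m} := by
  set S := {σ : ProbabilityMeasure (ℕ → X) | ∀ m, 1 ≤ m → projPM m σ ∈ K m} with hS
  have hcl : IsClosed S := by
    simp only [hS, Set.ofPred_forall]
    exact isClosed_iInter fun m => isClosed_iInter fun hm =>
      (hK m hm).isClosed.preimage (projPM_continuous m)
  rw [← hcl.closure_eq]
  apply isCompact_closure_of_isTightMeasureSet
  rw [isTightMeasureSet_iff_exists_isCompact_measure_compl_le]
  intro ε hε
  obtain ⟨δ, hδ, hsum⟩ := ENNReal.exists_pos_sum_of_countable' hε.ne' ℕ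
  choose C hC hCm using fun m : ℕ => tight_of_compact (K (m+1)) (hK (m+1) (by omega)) (δ m) (hδ m)
  refine ⟨⋂ m, (fun (x : ℕ → X) (i : Fin (m+1)) => x i) ⁻¹' C m, ?_, ?_⟩
  · refine IsCompact.of_isClosed_subset
      (isCompact_univ_pi fun i => (hC i).image (continuous_apply (Fin.last i))) ?_ ?_
    · exact isClosed_iInter fun m => (hC m).isClosed.preimage (by fun_prop)
    · intro x hx i _
      exact ⟨_, Set.mem_iInter.1 hx i, by simp⟩
  · rintro _ ⟨σ, hσ, rfl⟩
    rw [Set.compl_iInter]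
    refine (measure_iUnion_le _).trans (le_trans (ENNReal.tsum_le_tsum fun m => ?_) hsum.le)
    refine le_trans (le_of_eq ?_) (hCm m _ (hσ (m+1) (by omega)))
    change _ = Measure.map _ (σ : Measure (ℕ → X)) _
    rw [Measure.map_apply (by fun_prop) (hC m).isClosed.measurableSet.compl]
    rfl

theorem rate_mono (k : ℕ) {a b : ℝ≥0∞} (h : a ≤ b) :
    (((k : ℝ)⁻¹ : ℝ) : EReal) * ENNReal.log a ≤ (((k : ℝ)⁻¹ : ℝ) : EReal) * ENNReal.log b := by
  apply mul_le_mul_of_nonneg_left (ENNReal.log_monotone h)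
  exact_mod_cast (by positivity : (0:ℝ) ≤ (k:ℝ)⁻¹)

theorem rate_consistent {X : Type} [MetricSpace X] [PolishSpace X]
    [MeasurableSpace X] [BorelSpace X]
    {Ω : Type} [MeasurableSpace Ω] (P : Measure Ω)
    {Y : Type} [Nonempty Y] (ζ : ℕ → Y → Ω → ProbabilityMeasure (ℕ → X))
    (I : (m : ℕ) → ProbabilityMeasure (Fin m → X) → ℝ≥0∞)
    (hgood : ∀ m : ℕ, 1 ≤ m → GoodRate (I m))
    (hLDP : ∀ m : ℕ, 1 ≤ m →
      UnifLDPof (fun k F => ⨅ y : Y, P {ω | projPM m (ζ k y ω) ∈ F})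
        (fun k F => ⨆ y : Y, P {ω | projPM m (ζ k y ω) ∈ F}) (I m))
    {j m : ℕ} (hj : 1 ≤ j) (hjm : j ≤ m) (τ : ProbabilityMeasure (Fin m → X)) :
    I j (projFin hjm τ) ≤ I m τ := by
  apply le_of_forall_lt
  intro b hb
  obtain ⟨c, hbc, hc⟩ := exists_between hb
  refine lt_of_lt_of_le hbc ?_
  have hV : {μ | c < I j μ} ∈ 𝓝 (projFin hjm τ) := (hgood j hj).1 _ c hc
  obtain ⟨W, hW, hWc, hWV⟩ := exists_mem_nhds_isClosed_subset hV
  obtain ⟨U, hUW, hU, hτU⟩ := mem_nhds_iff.1 hW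
  have hcl : closure U ⊆ {μ | c < I j μ} := (closure_minimal hUW hWc).trans hWV
  have h1 := (hLDP m (hj.trans hjm) (projFin hjm ⁻¹' U)).1
  have h2 := (hLDP j hj U).2
  rw [(hU.preimage (projFin_continuous hjm)).interior_eq] at h1
  have h3 : -(I m τ : EReal) ≤ -(c : EReal) := by
    calc -(I m τ : EReal) ≤ -(⨅ σ ∈ projFin hjm ⁻¹' U, (I m σ : EReal)) :=
          EReal.neg_le_neg_iff.2 (iInf₂_le τ hτU)
      _ ≤ _ := h1
      _ ≤ _ := liminf_le_liminf (.of_forall fun k => rate_mono k ?_)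
      _ ≤ _ := liminf_le_limsup
      _ ≤ _ := h2
      _ ≤ _ := EReal.neg_le_neg_iff.2 (le_iInf₂ fun μ hμ => ?_)
    · have y : Y := Classical.arbitrary Y
      refine (iInf_le _ y).trans (le_trans (le_of_eq ?_) (le_iSup _ y))
      simp only [Set.mem_preimage, projFin_projPM]
    · exact EReal.coe_ennreal_le_coe_ennreal_iff.2 (le_of_lt (hcl hμ))
  exact EReal.coe_ennreal_le_coe_ennreal_iff.1 (EReal.neg_le_neg_iff.1 h3)

theorem exists_level {X : Type} [MetricSpace X] [PolishSpace X]
    [MeasurableSpace X] [BorelSpace X]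
    (I : (m : ℕ) → ProbabilityMeasure (Fin m → X) → ℝ≥0∞)
    (hgood : ∀ m : ℕ, 1 ≤ m → GoodRate (I m))
    (hcons : ∀ j m : ℕ, 1 ≤ j → ∀ (hjm : j ≤ m) (τ : ProbabilityMeasure (Fin m → X)),
      I j (projFin hjm τ) ≤ I m τ)
    (Γ : Set (ProbabilityMeasure (ℕ → X))) (a : ℝ≥0∞) (ha : a ≠ ⊤)
    (hΓ : ∀ σ ∈ closure Γ, ∃ m, 1 ≤ m ∧ a < I m (projPM m σ)) :
    ∃ m, 1 ≤ m ∧ ∀ τ ∈ closure (projPM m '' Γ), a < I m τ := by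
  by_contra! hcon
  have hx : Nonempty X := by
    obtain ⟨t, ht, -⟩ := hcon 1 le_rfl
    obtain ⟨_, σ, -⟩ := closure_nonempty_iff.1 ⟨_, ht⟩
    have : Nonempty (ℕ → X) := (σ : Measure (ℕ → X)).nonempty_of_neZero
    exact ⟨this.some 0⟩
  obtain ⟨x0⟩ := hx
  have hex : ∀ m, ∃ s : ProbabilityMeasure (ℕ → X), 1 ≤ m →
      projPM m s ∈ closure (projPM m '' Γ) ∧ I m (projPM m s) ≤ a := by
    intro m
    by_cases hm : 1 ≤ m
    · obtain ⟨t, ht, hta⟩ := hcon m hm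
      obtain ⟨s, rfl⟩ := exists_ext x0 m t
      exact ⟨s, fun _ => ⟨ht, hta⟩⟩
    · obtain ⟨t, ht, hta⟩ := hcon 1 le_rfl
      obtain ⟨s, rfl⟩ := exists_ext x0 1 t
      exact ⟨s, fun h => absurd h hm⟩
  choose s hs using hex
  have hcomp : IsCompact {σ : ProbabilityMeasure (ℕ → X) | ∀ m, 1 ≤ m → projPM m σ ∈
      {μ | I m μ ≤ a} ∪ (fun n => projPM m (s n)) '' Set.Iio m} :=
    compact_proj _ fun m hm => ((hgood m hm).2 a ha).union
      ((Set.finite_Iio m).image _).isCompact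
  have hmem : ∀ j n, 1 ≤ j → j ≤ n → I j (projPM j (s n)) ≤ a := by
    intro j n hj hjn
    rw [← projFin_projPM hjn]
    exact (hcons j n hj hjn _).trans (hs n (hj.trans hjn)).2
  obtain ⟨σ, -, hσ⟩ := hcomp.exists_mapClusterPt (f := atTop) (u := s) (by
    refine tendsto_principal.2 (.of_forall fun n m hm => ?_)
    rcases le_or_gt m n with h | h
    · exact Or.inl (hmem m n hm h)
    · exact Or.inr ⟨n, h, rfl⟩)
  have hσF : σ ∈ closure Γ := by
    rw [mem_closure_iff_nhds]
    intro G hG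
    obtain ⟨j, U, hU, hσU, hUG⟩ := exists_cyl_nhds σ G hG
    have hf := mapClusterPt_iff_frequently.1 hσ _ ((hU.preimage (projPM_continuous _)).mem_nhds hσU)
    obtain ⟨n, hnU, hn⟩ := (hf.and_eventually (eventually_ge_atTop (j+1))).exists
    have h1 : projPM n (s n) ∈ projFin hn ⁻¹' U := by
      rw [Set.mem_preimage, projFin_projPM]; exact hnU
    obtain ⟨_, h2, ν, hν, rfl⟩ := mem_closure_iff.1 (hs n (by omega)).1 _
      (hU.preimage (projFin_continuous hn)) h1
    rw [Set.mem_preimage, projFin_projPM] at h2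
    exact ⟨ν, hUG h2, hν⟩
  obtain ⟨m, hm, hlt⟩ := hΓ σ hσF
  have hopen : {μ | a < I m μ} ∈ 𝓝 (projPM m σ) := (hgood m hm).1 _ a hlt
  have hf := mapClusterPt_iff_frequently.1 hσ _
    ((projPM_continuous m).continuousAt.preimage_mem_nhds hopen)
  obtain ⟨n, h1, h2⟩ := (hf.and_eventually (eventually_ge_atTop m)).exists
  exact absurd (hmem m n hm h2) (not_le.2 h1)

/-- **Theorem 7.4 (uniform Dawson–Gärtner theorem)**: if for every `m ≥ 1` the projected
families `{ζ_k^m(y), y ∈ Y}` satisfy the uniform LDP with good rate functions `I_m`, then the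
family `{𝜻_k(y), y ∈ Y}` satisfies the uniform LDP with the good rate function
`𝐈(σ) = sup_{m ≥ 1} I_m(σ ∘ p_m⁻¹)`. -/
theorem statement16 {X : Type} [MetricSpace X] [PolishSpace X]
    [SecondCountableTopology X] [MeasurableSpace X] [BorelSpace X]
    {Ω : Type} [MeasurableSpace Ω] (P : Measure Ω) [IsProbabilityMeasure P]
    {Y : Type} (ζ : ℕ → Y → Ω → ProbabilityMeasure (ℕ → X))
    (I : (m : ℕ) → ProbabilityMeasure (Fin m → X) → ℝ≥0∞)
    (hgood : ∀ m : ℕ, 1 ≤ m → GoodRate (I m))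
    (hLDP : ∀ m : ℕ, 1 ≤ m →
      UnifLDPof (fun k F => ⨅ y : Y, P {ω | projPM m (ζ k y ω) ∈ F})
        (fun k F => ⨆ y : Y, P {ω | projPM m (ζ k y ω) ∈ F}) (I m)) :
    GoodRate (fun σ : ProbabilityMeasure (ℕ → X) =>
      ⨆ m : ℕ, ⨆ _ : 1 ≤ m, I m (projPM m σ)) ∧
    UnifLDPof (fun k F => ⨅ y : Y, P {ω | ζ k y ω ∈ F})
      (fun k F => ⨆ y : Y, P {ω | ζ k y ω ∈ F})
      (fun σ : ProbabilityMeasure (ℕ → X) =>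
        ⨆ m : ℕ, ⨆ _ : 1 ≤ m, I m (projPM m σ)) := by
  constructor
  · refine ⟨?_, fun c hc => ?_⟩
    · refine lowerSemicontinuous_iSup fun m => lowerSemicontinuous_iSup fun hm => ?_
      exact fun σ c hc => (projPM_continuous m).continuousAt.eventually ((hgood m hm).1 _ c hc)
    · convert compact_proj (fun m => {μ | I m μ ≤ c}) (fun m hm => (hgood m hm).2 c hc) using 1
      ext σ
      simp
  intro Γ
  constructor
  · rw [EReal.neg_le]
    refine le_iInf₂ fun σ hσ => ?_
    rw [EReal.neg_le]
    obtain ⟨m, U, hU, hσU, hUG⟩ := exists_cyl_nhds σ Γ (mem_interior_iff_mem_nhds.1 hσ)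
    have h1 := (hLDP (m+1) (by omega) U).1
    rw [hU.interior_eq] at h1
    calc _ ≤ -(I (m+1) (projPM (m+1) σ) : EReal) := by
          rw [EReal.neg_le_neg_iff, EReal.coe_ennreal_le_coe_ennreal_iff]
          exact le_iSup₂ (f := fun m (_ : 1 ≤ m) => I m (projPM m σ)) (m+1) (by omega)
      _ ≤ _ := EReal.neg_le_neg_iff.2 (iInf₂_le _ hσU)
      _ ≤ _ := h1
      _ ≤ _ := liminf_le_liminf (.of_forall fun k => rate_mono k
          (iInf_mono fun y => measure_mono fun ω hω => hUG hω))
  · rcases isEmpty_or_nonempty Y with hY | hY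
    · have h0 := (hLDP 1 le_rfl ∅).2
      simp only [iSup_of_empty] at h0 ⊢
      refine h0.trans ?_
      simp
    have hcons := fun j m hj hjm τ => rate_consistent P ζ I hgood hLDP (j := j) (m := m) hj hjm τ
    rw [EReal.le_neg]
    apply le_of_forall_lt
    intro b hb
    obtain ⟨c, hbc, hc⟩ := exists_between hb
    refine lt_of_lt_of_le hbc ?_
    rw [EReal.le_neg]
    have key : ∃ m, 1 ≤ m ∧ ∀ τ ∈ closure (projPM m '' Γ), c ≤ (I m τ : EReal) := by
      rcases le_or_gt c 0 with h0 | h0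
      · exact ⟨1, le_rfl, fun τ _ => h0.trans (EReal.coe_ennreal_nonneg _)⟩
      · have hca : (c.toENNReal : EReal) = c := EReal.coe_toENNReal h0.le
        obtain ⟨m, hm, h⟩ := exists_level I hgood hcons Γ c.toENNReal
          (by
            intro h
            rw [h] at hca
            rw [← hca] at hc
            exact absurd hc (by simp))
          (by
            intro σ hσ
            have := lt_of_lt_of_le hc (iInf₂_le σ hσ)
            rw [← hca, EReal.coe_ennreal_lt_coe_ennreal_iff] at this
            simpa [lt_iSup_iff] using this)
        refine ⟨m, hm, fun τ hτ => ?_⟩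
        rw [← hca, EReal.coe_ennreal_le_coe_ennreal_iff]
        exact (h τ hτ).le
    obtain ⟨m, hm, h⟩ := key
    have h2 := (hLDP m hm (projPM m '' Γ)).2
    refine le_trans (limsup_le_limsup (.of_forall fun k => rate_mono k ?_))
      (h2.trans (EReal.neg_le_neg_iff.2 (le_iInf₂ h)))
    exact iSup_mono fun y => measure_mono fun ω hω => Set.mem_image_of_mem (projPM m) hω
end
end
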